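/- Let A be a σ-unital algebraically simple C*-algebra with strict comparison and surjective canonical map Γ, which is not purely infinite. Suppose e ∈ Ped(A⊗K)_+ is a nonzero contraction. Then for any ε > 0 there exists a positive contraction e₀ ∈ Her(e) satisfying: (1) d_τ(e) − d_τ(e₀) < ε for all τ ∈ \overline{QT(A)}^w; and (2) there exists an increasing sequence (e_{0,n}) of positive contractions in Her(e₀) such that τ(e_{0,n}) increases to d_τ(e₀) for every τ ∈ \overline{QT(A)}^w and ω(e_{0,n}) < ε for all n ∈ ℕ. -/

import Mathlib

open scoped ENNReal
open Filter Topology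

noncomputable section

namespace Paper

/-! ### Generic definitions in a (non-unital) C*-algebra -/

variable (R : Type*) [NonUnitalCStarAlgebra R] [PartialOrder R] [StarOrderedRing R]

variable {R} in
/-- The hereditary C*-subalgebra generated by `b`, i.e. `closure (b R b)`. -/
def her (b : R) : Set R := closure {x : R | ∃ y : R, x = b * y * b}

/-- `I` is a (not necessarily closed) two-sided ideal of the subalgebra `B`. -/
def IsIdealIn (B I : Set R) : Prop :=
  I ⊆ B ∧ (0 : R) ∈ I ∧ (∀ x ∈ I, ∀ y ∈ I, x + y ∈ I) ∧ (∀ x ∈ I, -x ∈ I) ∧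
    (∀ x ∈ I, ∀ b ∈ B, x * b ∈ I ∧ b * x ∈ I)

variable {R} in
/-- The Pedersen ideal of the subalgebra `B`: the minimal dense two-sided ideal of `B`,
equivalently the intersection of all dense two-sided ideals of `B`. -/
def pedersenIn (B : Set R) : Set R :=
  ⋂ I ∈ {I : Set R | IsIdealIn R B I ∧ B ⊆ closure I}, I

/-- The Pedersen ideal of `R`. -/
def pedersen : Set R := pedersenIn (Set.univ : Set R)

variable {R} in
/-- Cuntz subequivalence `a ≲ b`. -/
def CuntzLE (a b : R) : Prop :=
  ∃ x : ℕ → R, Tendsto (fun n => ‖a - star (x n) * b * x n‖) atTop (𝓝 0)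

variable {R} in
/-- Cuntz subequivalence relative to a subset `B` (the `xₙ` are taken in `B`). -/
def CuntzLEIn (B : Set R) (a b : R) : Prop :=
  ∃ x : ℕ → R, (∀ n, x n ∈ B) ∧ Tendsto (fun n => ‖a - star (x n) * b * x n‖) atTop (𝓝 0)

variable {R} in
/-- Cuntz equivalence `a ∼ b`. -/
def CuntzEq (a b : R) : Prop := CuntzLE a b ∧ CuntzLE b a

/-- The cut-off function `f_ε`: `0` on `[0, ε/2]`, `1` on `[ε, ∞)`, linear in between. -/
def cutoff (ε : ℝ) : ℝ → ℝ := fun t => min 1 (max 0 (2 * t / ε - 1))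

variable {R} in
/-- `f_ε(a)`, via the (non-unital) continuous functional calculus. -/
def fEps (ε : ℝ) (a : R) : R := cfcₙ (cutoff ε) a

/-- A densely defined 2-quasitrace on `R` (recorded by its values on positive elements;
the value on non-positive elements is normalised to `0`). -/
structure QuasiTrace : Type _ where
  toFun : R → ℝ≥0∞
  zero_of_not_nonneg : ∀ a : R, ¬ (0 ≤ a) → toFun a = 0
  map_zero : toFun 0 = 0
  map_smul : ∀ (r : ℝ) (a : R), 0 < r → 0 ≤ a → toFun (r • a) = ENNReal.ofReal r * toFun a
  map_add_of_commute : ∀ a b : R, 0 ≤ a → 0 ≤ b → a * b = b * a →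
    toFun (a + b) = toFun a + toFun b
  map_star_mul_self : ∀ x : R, toFun (star x * x) = toFun (x * star x)
  lowerSemicontinuousOn : LowerSemicontinuousOn toFun {a : R | 0 ≤ a}
  finite_on_pedersen : ∀ a ∈ pedersen R, 0 ≤ a → toFun a < ∞
  exists_matrix_extension : ∃ σ : Matrix (Fin 2) (Fin 2) R → ℝ≥0∞,
    (∀ a : R, σ (fun i j => if i = 0 ∧ j = 0 then a else 0) = toFun a) ∧
    σ 0 = 0 ∧
    (∀ (r : ℝ) (x : Matrix (Fin 2) (Fin 2) R), 0 < r → (∃ y, x = star y * y) →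
      σ (r • x) = ENNReal.ofReal r * σ x) ∧
    (∀ x y : Matrix (Fin 2) (Fin 2) R, (∃ z, x = star z * z) → (∃ z, y = star z * z) →
      x * y = y * x → σ (x + y) = σ x + σ y) ∧
    (∀ x : Matrix (Fin 2) (Fin 2) R, σ (star x * x) = σ (x * star x))

/-- The topology of pointwise convergence on the Pedersen ideal. -/
instance : TopologicalSpace (QuasiTrace R) :=
  TopologicalSpace.induced (fun τ => fun a : pedersen R => τ.toFun a) inferInstance

variable {R}

/-- The zero quasitrace. -/
def QuasiTrace.IsZero (τ : QuasiTrace R) : Prop := ∀ a : R, τ.toFun a = 0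

/-- The dimension function `d_τ(a) = lim_{ε → 0} τ(f_ε(a))`. -/
def dTau (τ : QuasiTrace R) (a : R) : ℝ≥0∞ :=
  ⨆ n : ℕ, τ.toFun (fEps (1 / (n + 1)) a)

/-- `ω(a)` relative to a set `S` of quasitraces:
`lim_n sup {d_τ(a) - τ(f_{1/n}(a)) : τ ∈ S}`. -/
def omegaOn (S : Set (QuasiTrace R)) (a : R) : ℝ≥0∞ :=
  ⨅ n : ℕ, ⨆ τ ∈ S, (dTau τ a - τ.toFun (fEps (1 / (n + 1)) a))

/-- The seminorm `‖x‖_{2,S}`. -/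
def norm2On (S : Set (QuasiTrace R)) (x : R) : ℝ≥0∞ :=
  ⨆ τ ∈ S, (τ.toFun (star x * x)) ^ (1 / 2 : ℝ)

variable (R)

/-- `R` has (Blackadar's) strict comparison. -/
def StrictComparison : Prop :=
  ∀ a b : R, 0 ≤ a → 0 ≤ b →
    (∀ τ : QuasiTrace R, ¬ τ.IsZero → dTau τ a < dTau τ b) → CuntzLE a b

/-- `R` is a simple C*-algebra: it is nonzero and has no nontrivial closed two-sided ideals. -/
def IsSimpleCStar : Prop :=
  (∃ x : R, x ≠ 0) ∧
    ∀ I : TwoSidedIdeal R, IsClosed (I : Set R) → (I : Set R) = {0} ∨ (I : Set R) = Set.univ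

/-- `R` is σ-unital: it contains a strictly positive element `h`
(equivalently, `Her(h) = R`). -/
def SigmaUnital : Prop := ∃ h : R, 0 ≤ h ∧ her h = Set.univ

/-- `R` is elementary: isomorphic to the algebra of compact operators on some Hilbert space. -/
def IsElementary : Prop :=
  ∃ (H : Type) (_ : NormedAddCommGroup H) (_ : InnerProductSpace ℂ H) (_ : CompleteSpace H)
    (φ : R →⋆ₙₐ[ℂ] (H →L[ℂ] H)), Function.Injective φ ∧
      Set.range φ = {T : H →L[ℂ] H | IsCompactOperator (⇑T)}

/-- `R` is purely infinite: `R ≇ ℂ` and `b ≲ a` for all nonzero positive `a, b`. -/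
def PurelyInfinite : Prop :=
  (¬ ∃ φ : R →⋆ₙₐ[ℂ] ℂ, Function.Bijective φ) ∧
    ∀ a b : R, 0 ≤ a → 0 ≤ b → a ≠ 0 → b ≠ 0 → CuntzLE b a

/-- `R` is finite: its minimal unitization contains no non-unitary isometry. -/
def IsFiniteCStar : Prop :=
  ∀ v : Unitization ℂ R, star v * v = 1 → v * star v = 1

/-- `R` has stable rank one: the invertible elements are dense in the minimal unitization. -/
def StableRankOne : Prop := Dense {x : Unitization ℂ R | IsUnit x}

variable {R}

/-- `c` represents `n·[a]` in the Cuntz semigroup: it is the sum of `n` mutually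
orthogonal positive elements, each Cuntz equivalent to `a`. -/
def IsNFoldRep (n : ℕ) (a c : R) : Prop :=
  ∃ f : Fin n → R, (∀ i, 0 ≤ f i) ∧ (∀ i, CuntzEq (f i) a) ∧
    (∀ i j, i ≠ j → f i * f j = 0) ∧ c = ∑ i, f i

/-- `s` represents the supremum of the increasing sequence of Cuntz classes `[y n]`. -/
def IsCuntzLUB (y : ℕ → R) (s : R) : Prop :=
  (∀ n, CuntzLE (y n) s) ∧ ∀ c : R, 0 ≤ c → (∀ n, CuntzLE (y n) c) → CuntzLE s c

/-- `[x] ≪ [y]` in the Cuntz semigroup. -/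
def CuntzWayBelow (x y : R) : Prop :=
  ∀ yseq : ℕ → R, (∀ n, 0 ≤ yseq n) → (∀ n, CuntzLE (yseq n) (yseq (n + 1))) →
    ∀ s : R, 0 ≤ s → IsCuntzLUB yseq s → CuntzLE y s → ∃ n₀, CuntzLE x (yseq n₀)

variable (R)

/-- The Cuntz semigroup of `R` is almost unperforated. -/
def AlmostUnperforated : Prop :=
  ∀ (a b : R) (k : ℕ), 1 ≤ k → 0 ≤ a → 0 ≤ b →
    (∃ c d : R, IsNFoldRep (k + 1) a c ∧ IsNFoldRep k b d ∧ CuntzLE c d) → CuntzLE a b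

/-- The Cuntz semigroup of `R` is almost divisible. -/
def AlmostDivisible : Prop :=
  ∀ x y : R, 0 ≤ x → 0 ≤ y → CuntzWayBelow x y → ∀ n : ℕ, 1 ≤ n →
    ∃ z : R, 0 ≤ z ∧ (∃ c : R, IsNFoldRep n z c ∧ CuntzLE c y) ∧
      (∃ c : R, IsNFoldRep (n + 1) z c ∧ CuntzLE x c)

/-! ### The stabilization `W ≅ A ⊗ K` -/

variable (A W : Type*) [NonUnitalCStarAlgebra A] [PartialOrder A] [StarOrderedRing A]
  [NonUnitalCStarAlgebra W] [PartialOrder W] [StarOrderedRing W]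

/-- A realization of `W` as the stabilization `A ⊗ K`: the maps `emb i j : a ↦ a ⊗ e_{ij}`
are isometric, satisfy the matrix-unit relations, and have dense joint linear span. -/
structure Stabilization : Type _ where
  emb : ℕ → ℕ → (A →ₗ[ℂ] W)
  emb_mul : ∀ (i j k l : ℕ) (a b : A),
    emb i j a * emb k l b = if j = k then emb i l (a * b) else 0
  emb_star : ∀ (i j : ℕ) (a : A), star (emb i j a) = emb j i (star a)
  norm_emb : ∀ (i j : ℕ) (a : A), ‖emb i j a‖ = ‖a‖
  dense_span : Dense (Submodule.span ℂ {w : W | ∃ (i j : ℕ) (a : A), w = emb i j a} : Set W)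

variable {A W}

/-- The set `QT(A)` of quasitraces normalized on `A ⊆ A ⊗ K`. -/
def QTSet (SB : Stabilization A W) : Set (QuasiTrace W) :=
  {τ | (⨆ a : {a : A // 0 ≤ a ∧ ‖a‖ ≤ 1}, τ.toFun (SB.emb 0 0 a)) = 1}

/-- The quasitraces normalized on the hereditary subalgebra `Her(c) ⊆ W`. -/
def QTSetHer (c : W) : Set (QuasiTrace W) :=
  {τ : QuasiTrace W |
    (⨆ a : {a : W // a ∈ her c ∧ 0 ≤ a ∧ ‖a‖ ≤ 1}, τ.toFun a) = 1}

/-- `ω(a) = 0` for `a ∈ W = A ⊗ K`, computed relative to `\overline{QT(Her(e))}^w`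
for any nonzero `e ∈ Ped(A)₊`. -/
def OmegaZero (SB : Stabilization A W) (a : W) : Prop :=
  ∀ e : A, 0 ≤ e → e ≠ 0 → e ∈ pedersen A →
    omegaOn (closure (QTSetHer (SB.emb 0 0 e))) a = 0

/-- `A` has tracial approximate oscillation zero. -/
def TAOZ (SB : Stabilization A W) : Prop :=
  ∀ e : A, 0 ≤ e → e ≠ 0 → e ∈ pedersen A →
    ∀ a : W, 0 ≤ a → a ∈ pedersen W →
      ∃ b : ℕ → W, (∀ n, 0 ≤ b n) ∧ (∀ n, ‖b n‖ ≤ 1) ∧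
        (∀ n, b n ∈ pedersenIn (her a)) ∧
        Tendsto (fun n => omegaOn (closure (QTSetHer (SB.emb 0 0 e))) (b n)) atTop (𝓝 0) ∧
        Tendsto (fun n => norm2On (closure (QTSetHer (SB.emb 0 0 e))) (a - b n)) atTop (𝓝 0)

/-! ### Affine functions on the quasitrace cone and the map `Γ` -/

variable (W) in
/-- `ρ = t·τ + (1-t)·σ` as quasitraces. -/
def IsCombo (t : ℝ) (τ σ ρ : QuasiTrace W) : Prop :=
  ∀ a : W, 0 ≤ a →
    ρ.toFun a = ENNReal.ofReal t * τ.toFun a + ENNReal.ofReal (1 - t) * σ.toFun a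

variable (W) in
/-- `f` is affine on the quasitrace cone. -/
def IsAffineQT (f : QuasiTrace W → ℝ≥0∞) : Prop :=
  ∀ t : ℝ, 0 ≤ t → t ≤ 1 → ∀ τ σ ρ : QuasiTrace W, IsCombo W t τ σ ρ →
    f ρ = ENNReal.ofReal t * f τ + ENNReal.ofReal (1 - t) * f σ

variable (W) in
/-- Membership in `Aff₊(QT̃(A))`. -/
def MemAffPlus (f : QuasiTrace W → ℝ≥0∞) : Prop :=
  (∀ τ, f τ = 0) ∨
    (Continuous f ∧ IsAffineQT W f ∧ (∀ τ, f τ < ∞) ∧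
      (∀ τ : QuasiTrace W, ¬ τ.IsZero → 0 < f τ) ∧
      (∀ τ : QuasiTrace W, τ.IsZero → f τ = 0))

variable (W) in
/-- Membership in `LAff₊(QT̃(A))`. -/
def MemLAffPlus (f : QuasiTrace W → ℝ≥0∞) : Prop :=
  ∃ g : ℕ → QuasiTrace W → ℝ≥0∞, (∀ n, MemAffPlus W (g n)) ∧
    (∀ n τ, g n τ ≤ g (n + 1) τ) ∧ ∀ τ, f τ = ⨆ n, g n τ

variable (W) in
/-- The canonical map `Γ : Cu(A) → LAff₊(QT̃(A))`, `Γ([a])(τ) = d_τ(a)`, is surjective. -/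
def GammaSurjective : Prop :=
  ∀ f : QuasiTrace W → ℝ≥0∞, MemLAffPlus W f →
    ∃ a : W, 0 ≤ a ∧ ∀ τ : QuasiTrace W, dTau τ a = f τ


section Helpers
set_option linter.unusedSectionVars false
set_option linter.unusedVariables false
open scoped ContinuousMapZero

lemma semiconj_cfcn {x a b : W} (ha : IsSelfAdjoint a) (hb : IsSelfAdjoint b)
    (h : x * a = b * x) (f : ℝ → ℝ) (hf : Continuous f) (hf0 : f 0 = 0) :
    x * cfcₙ f a = cfcₙ f b * x := by
  set s : Set ℝ := quasispectrum ℝ a ∪ quasispectrum ℝ b with hs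
  have hsc : IsCompact s :=
    (NonUnitalContinuousFunctionalCalculus.isCompact_quasispectrum a).union
      (NonUnitalContinuousFunctionalCalculus.isCompact_quasispectrum b)
  haveI : CompactSpace s := isCompact_iff_compactSpace.mp hsc
  haveI h0 : Fact ((0 : ℝ) ∈ s) := ⟨Or.inl (quasispectrum.zero_mem ℝ a)⟩
  have has : quasispectrum ℝ a ⊆ s := Set.subset_union_left
  have hbs : quasispectrum ℝ b ⊆ s := Set.subset_union_right
  have key : ∀ g : C(s, ℝ)₀, x * cfcₙHomSuperset ha has g = cfcₙHomSuperset hb hbs g * x := by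
    intro g
    induction g using ContinuousMapZero.induction_on_of_compact with
    | zero => rw [map_zero, map_zero]; simp
    | id => rw [cfcₙHomSuperset_id, cfcₙHomSuperset_id]; exact h
    | star_id => rw [star_trivial, cfcₙHomSuperset_id, cfcₙHomSuperset_id]; exact h
    | add f g hf hg => rw [map_add, map_add, mul_add, add_mul, hf, hg]
    | mul f g hf hg => rw [map_mul, map_mul, ← mul_assoc, hf, mul_assoc, hg, mul_assoc]
    | smul r f hf => rw [map_smul, map_smul, mul_smul_comm, smul_mul_assoc, hf]
    | frequently f hf =>
      have hcl : IsClosed {g : C(s, ℝ)₀ |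
          x * cfcₙHomSuperset ha has g = cfcₙHomSuperset hb hbs g * x} :=
        isClosed_eq ((cfcₙHomSuperset_continuous ha has).const_mul x)
          ((cfcₙHomSuperset_continuous hb hbs).mul_const x)
      exact hcl.closure_subset (mem_closure_iff_frequently.mpr hf)
  have := key ⟨⟨_, hf.continuousOn.domRestrict⟩, hf0⟩
  rw [cfcₙHomSuperset_apply, cfcₙHomSuperset_apply] at this
  rw [cfcₙ_apply f a hf.continuousOn hf0 ha, cfcₙ_apply f b hf.continuousOn hf0 hb]
  exact this

lemma cfcn_sa (f : ℝ → ℝ) (a : W) : IsSelfAdjoint (cfcₙ f a) := cfcₙ_predicate f a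

lemma cfcn_star (f : ℝ → ℝ) (a : W) : star (cfcₙ f a) = cfcₙ f a := (cfcn_sa f a).star_eq

/-- orthogonality passes to functional calculus -/
lemma mul_cfcn_eq_zero {x a : W} (ha : IsSelfAdjoint a) (h : x * a = 0) (f : ℝ → ℝ)
    (hf : Continuous f) (hf0 : f 0 = 0) : x * cfcₙ f a = 0 := by
  have := semiconj_cfcn (x := x) ha (IsSelfAdjoint.zero W) (by rw [h, zero_mul]) f hf hf0
  rw [this, cfcₙ_apply_zero, zero_mul]

lemma cfcn_mul_eq_zero {x a : W} (ha : IsSelfAdjoint a) (h : a * x = 0) (f : ℝ → ℝ)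
    (hf : Continuous f) (hf0 : f 0 = 0) : cfcₙ f a * x = 0 := by
  have := mul_cfcn_eq_zero (x := star x) ha (by
    have := congrArg star h; simpa [ha.star_eq] using this) f hf hf0
  have := congrArg star this
  simpa [cfcn_star] using this

lemma cfcn_add_orth {a b : W} (ha : IsSelfAdjoint a) (hb : IsSelfAdjoint b) (h : a * b = 0)
    (f : ℝ → ℝ) (hf : Continuous f) (hf0 : f 0 = 0) :
    cfcₙ f (a + b) = cfcₙ f a + cfcₙ f b := by
  have h' : b * a = 0 := by
    have := congrArg star h; simpa [ha.star_eq, hb.star_eq] using this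
  have e1 := semiconj_cfcn (x := a) (ha.add hb) ha (by rw [mul_add, h, add_zero]) f hf hf0
  have e1' := semiconj_cfcn (x := a) ha ha rfl f hf hf0
  have e2 := semiconj_cfcn (x := b) (ha.add hb) hb (by rw [mul_add, h', zero_add]) f hf hf0
  have e2' := semiconj_cfcn (x := b) hb hb rfl f hf hf0
  have e3 := mul_cfcn_eq_zero hb h f hf hf0
  have e4 := mul_cfcn_eq_zero ha h' f hf hf0
  set Y := cfcₙ f (a + b) - (cfcₙ f a + cfcₙ f b) with hY
  have hYsa : IsSelfAdjoint Y := ((cfcn_sa _ _).sub ((cfcn_sa _ _).add (cfcn_sa _ _)))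
  have haY : a * Y = 0 := by rw [hY, mul_sub, mul_add, e1, e1', e3]; simp
  have hbY : b * Y = 0 := by rw [hY, mul_sub, mul_add, e2, e2', e4]; simp
  have z1 := cfcn_mul_eq_zero ha haY f hf hf0
  have z2 := cfcn_mul_eq_zero hb hbY f hf hf0
  have z3 := cfcn_mul_eq_zero (ha.add hb) (x := Y) (by rw [add_mul, haY, hbY, add_zero]) f hf hf0
  have : star Y * Y = 0 := by
    rw [hYsa.star_eq]
    nth_rewrite 1 [hY]
    rw [sub_mul, add_mul, z1, z2, z3]; simp
  have := CStarRing.star_mul_self_eq_zero_iff Y |>.mp this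
  exact sub_eq_zero.mp this

lemma spec_nonneg {a : W} (ha : 0 ≤ a) {x : ℝ} (hx : x ∈ quasispectrum ℝ a) : 0 ≤ x :=
  quasispectrum_nonneg_of_nonneg a ha x hx

lemma cfcn_nn {f : ℝ → ℝ} {a : W} (ha : 0 ≤ a) (h : ∀ x, 0 ≤ x → 0 ≤ f x) : 0 ≤ cfcₙ f a :=
  cfcₙ_nonneg fun x hx => h x (spec_nonneg ha hx)

lemma cfcn_le {f g : ℝ → ℝ} {a : W} (ha : 0 ≤ a) (hf : Continuous f) (hf0 : f 0 = 0)
    (hg : Continuous g) (hg0 : g 0 = 0) (h : ∀ x, 0 ≤ x → f x ≤ g x) : cfcₙ f a ≤ cfcₙ g a :=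
  cfcₙ_mono (fun x hx => h x (spec_nonneg ha hx)) hf.continuousOn hg.continuousOn hf0 hg0

lemma cfcn_eq {f g : ℝ → ℝ} {a : W} (ha : 0 ≤ a) (h : ∀ x, 0 ≤ x → f x = g x) :
    cfcₙ f a = cfcₙ g a :=
  cfcₙ_congr fun x hx => h x (spec_nonneg ha hx)

lemma cfcn_norm_le {f : ℝ → ℝ} {a : W} (ha : 0 ≤ a) {c : ℝ} (h : ∀ x, 0 ≤ x → |f x| ≤ c) :
    ‖cfcₙ f a‖ ≤ c :=
  norm_cfcₙ_le fun x hx => h x (spec_nonneg ha hx)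

lemma cfcn_mul' {f g h : ℝ → ℝ} {a : W} (ha : 0 ≤ a) (hf : Continuous f) (hf0 : f 0 = 0)
    (hg : Continuous g) (hg0 : g 0 = 0) (hh : ∀ x, 0 ≤ x → f x * g x = h x) :
    cfcₙ f a * cfcₙ g a = cfcₙ h a := by
  rw [← cfcₙ_mul f g a hf.continuousOn hf0 hg.continuousOn hg0]
  exact cfcn_eq ha hh

lemma cfcn_comp' {f g h : ℝ → ℝ} {a : W} (ha : 0 ≤ a) (hf : Continuous f) (hf0 : f 0 = 0)
    (hg : Continuous g) (hg0 : g 0 = 0) (hh : ∀ x, 0 ≤ x → g (f x) = h x) :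
    cfcₙ g (cfcₙ f a) = cfcₙ h a := by
  rw [← cfcₙ_comp g f a hg.continuousOn hg0 hf.continuousOn hf0 (IsSelfAdjoint.of_nonneg ha)]
  exact cfcn_eq ha hh

lemma cfcn_id' {f : ℝ → ℝ} {a : W} (ha : 0 ≤ a) (hh : ∀ x, 0 ≤ x → f x = x) :
    cfcₙ f a = a := by
  rw [cfcn_eq (g := fun x => x) ha hh, cfcₙ_id' ℝ a (IsSelfAdjoint.of_nonneg ha)]

/-- continuity of functional calculus in the element -/
lemma cfcn_tendsto {a : ℕ → W} {b : W} (ha : ∀ n, 0 ≤ a n) (hb : 0 ≤ b)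
    (h : Tendsto a atTop (𝓝 b)) (f : ℝ → ℝ) (hf : Continuous f) (hf0 : f 0 = 0) :
    Tendsto (fun n => cfcₙ f (a n)) atTop (𝓝 (cfcₙ f b)) := by
  have hM : ∀ᶠ n in atTop, ‖a n‖ ≤ ‖b‖ + 1 :=
    (h.norm.eventually (gt_mem_nhds (lt_add_one ‖b‖))).mono fun n hn => le_of_lt hn
  have hq : ∀ c : W, 0 ≤ c → ‖c‖ ≤ ‖b‖ + 1 → quasispectrum ℝ c ⊆ Set.Icc 0 (‖b‖ + 1) := by
    intro c hc hn x hx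
    have h0 := spec_nonneg hc hx
    refine ⟨h0, ?_⟩
    have := norm_apply_le_norm_cfcₙ (𝕜 := ℝ) (fun x => x) c hx (by fun_prop) rfl
      (IsSelfAdjoint.of_nonneg hc)
    rw [cfcn_id' hc (fun _ _ => rfl)] at this
    exact (le_abs_self x).trans (this.trans hn)
  exact h.cfcₙ (s := Set.Icc (0 : ℝ) (‖b‖ + 1)) isCompact_Icc f
    (hM.mono fun n hn => hq _ (ha n) hn) (Eventually.of_forall fun n => IsSelfAdjoint.of_nonneg (ha n))
    (hq b hb (by linarith)) (IsSelfAdjoint.of_nonneg hb) hf.continuousOn hf0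

/-- the cut-down `(a - t)_+` -/
def cut (t : ℝ) (a : W) : W := cfcₙ (fun x : ℝ => max (x - t) 0) a

lemma cut_nonneg (t : ℝ) {a : W} (ha : 0 ≤ a) : 0 ≤ cut t a :=
  cfcn_nn ha fun x _ => le_max_right _ _

lemma cut_norm_sub {t : ℝ} (ht : 0 ≤ t) {a : W} (ha : 0 ≤ a) : ‖a - cut t a‖ ≤ t := by
  have : a - cut t a = cfcₙ (fun x : ℝ => x - max (x - t) 0) a := by
    rw [cfcₙ_sub (fun x : ℝ => x) (fun x => max (x - t) 0) a (by fun_prop) rfl (by fun_prop)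
      (by simpa using ht), cfcn_id' ha (fun _ _ => rfl)]; rfl
  rw [this]
  refine cfcn_norm_le ha fun x hx => ?_
  rw [abs_le]
  constructor
  · rcases max_cases (x - t) 0 with h | h <;> linarith [h.1, h.2]
  · rcases max_cases (x - t) 0 with h | h <;> linarith [h.1, h.2]

lemma cut_cut {s t : ℝ} (hs : 0 ≤ s) (ht : 0 ≤ t) {a : W} (ha : 0 ≤ a) :
    cut s (cut t a) = cut (s + t) a := by
  refine cfcn_comp' ha (by fun_prop) (by simpa using ht) (by fun_prop) (by simpa using hs) ?_
  intro x hx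
  rcases max_cases (x - t) 0 with h | h <;> rcases max_cases (max (x - t) 0 - s) 0 with h2 | h2 <;>
  rcases max_cases (x - (s + t)) 0 with h3 | h3 <;> linarith [h.1, h.2, h2.1, h2.2, h3.1, h3.2]

lemma cut_add_orth {t : ℝ} (ht : 0 ≤ t) {a b : W} (ha : 0 ≤ a) (hb : 0 ≤ b) (h : a * b = 0) :
    cut t (a + b) = cut t a + cut t b :=
  cfcn_add_orth (.of_nonneg ha) (.of_nonneg hb) h _ (by fun_prop) (by simpa using ht)

/-- square root -/
def sq (a : W) : W := cfcₙ (fun x : ℝ => Real.sqrt x) a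

lemma sq_sa (a : W) : star (sq a) = sq a := cfcn_star _ _

lemma sq_nonneg' {a : W} (ha : 0 ≤ a) : 0 ≤ sq a := cfcn_nn ha fun x _ => Real.sqrt_nonneg x

lemma sq_mul_sq {a : W} (ha : 0 ≤ a) : sq a * sq a = a := by
  unfold sq
  rw [cfcn_mul' (h := fun x => x) ha (by fun_prop) (by simp) (by fun_prop) (by simp)
    (fun x hx => Real.mul_self_sqrt hx)]
  exact cfcn_id' ha fun _ _ => rfl

lemma conj_nn {d : W} (hd : 0 ≤ d) (x : W) : 0 ≤ star x * d * x := star_left_conjugate_nonneg hd x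

lemma one_sub_conj_nn {d u : W} (hd : 0 ≤ d) (hu : star u = u) :
    0 ≤ d - u * d - d * u + u * d * u := by
  have : d - u * d - d * u + u * d * u = star (sq d - sq d * u) * (sq d - sq d * u) := by
    rw [star_sub, star_mul, sq_sa, hu]
    conv_lhs => rw [← sq_mul_sq hd]
    noncomm_ring
  rw [this]; exact star_mul_self_nonneg _

lemma r_sub_ru {a b u : W} (ha : 0 ≤ a) (hb : 0 ≤ b) (hu : star u = u) {C : ℝ} (hC : 0 ≤ C)
    (h : a ≤ C • b) :
    ‖sq a - sq a * u‖ ^ 2 ≤ C * ‖sq b - sq b * u‖ ^ 2 := by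
  have e1 : ∀ c : W, 0 ≤ c → star (sq c - sq c * u) * (sq c - sq c * u)
      = c - u * c - c * u + u * c * u := by
    intro c hc
    rw [star_sub, star_mul, sq_sa, hu]
    conv_rhs => rw [← sq_mul_sq hc]
    noncomm_ring
  have h1 := one_sub_conj_nn (sub_nonneg.mpr h) hu
  have h2 : a - u * a - a * u + u * a * u ≤ C • (b - u * b - b * u + u * b * u) := by
    rw [← sub_nonneg]
    convert h1 using 1
    simp only [smul_add, smul_sub, mul_sub, sub_mul, mul_smul_comm, smul_mul_assoc]
    abel
  have h3 := CStarAlgebra.norm_le_norm_of_nonneg_of_le (one_sub_conj_nn ha hu) h2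
  rw [← e1 a ha, ← e1 b hb, norm_smul, CStarRing.norm_star_mul_self, CStarRing.norm_star_mul_self,
    Real.norm_of_nonneg hC] at h3
  nlinarith [h3]

/-- a ≤ C b implies a ≲ b -/
lemma cuntz_of_le {a b : W} (ha : 0 ≤ a) (hb : 0 ≤ b) {C : ℝ} (hC : 0 ≤ C) (h : a ≤ C • b) :
    CuntzLE a b := by
  let δ : ℕ → ℝ := fun n => 1 / ((n : ℝ) + 1)
  have hδ : ∀ n, 0 < δ n := fun n => by positivity
  let u : ℕ → W := fun n => cfcₙ (fun x : ℝ => x / (|x| + δ n ^ 2)) b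
  let g : ℕ → W := fun n => cfcₙ (fun x : ℝ => Real.sqrt x / (|x| + δ n ^ 2)) b
  have cu : ∀ n, Continuous (fun x : ℝ => x / (|x| + δ n ^ 2)) := fun n =>
    Continuous.div (by fun_prop) (by fun_prop) (fun x => by have := hδ n; positivity)
  have cg : ∀ n, Continuous (fun x : ℝ => Real.sqrt x / (|x| + δ n ^ 2)) := fun n =>
    Continuous.div (by fun_prop) (by fun_prop) (fun x => by have := hδ n; positivity)
  have hsg : ∀ n, sq b * g n = u n := fun n =>
    cfcn_mul' hb (by fun_prop) (by simp) (cg n) (by simp) (fun x hx => by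
      rw [← mul_div_assoc, Real.mul_self_sqrt hx])
  have hus : ∀ n, star (u n) = u n := fun n => cfcn_star _ _
  have hgs : ∀ n, star (g n) = g n := fun n => cfcn_star _ _
  have hgs' : ∀ n, g n * sq b = u n := fun n => by
    have := congrArg star (hsg n)
    rwa [star_mul, sq_sa, hus, hgs] at this
  have hun : ∀ n, ‖u n‖ ≤ 1 := fun n => cfcn_norm_le hb fun x hx => by
    have := hδ n
    rw [abs_of_nonneg hx, abs_of_nonneg (by positivity), div_le_one (by positivity)]
    nlinarith
  have hbn : ∀ n, ‖sq b - sq b * u n‖ ≤ δ n := fun n => by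
    have : sq b - sq b * u n = cfcₙ (fun x : ℝ => Real.sqrt x - Real.sqrt x * (x / (|x| + δ n ^ 2))) b := by
      rw [cfcₙ_sub (fun x : ℝ => Real.sqrt x) (fun x : ℝ => Real.sqrt x * (x / (|x| + δ n ^ 2))) b (by fun_prop) (by simp)
        ((Continuous.mul (by fun_prop) (cu n)).continuousOn) (by simp)]
      congr 1
      exact cfcn_mul' hb (by fun_prop) (by simp) (cu n) (by simp) (fun x hx => rfl)
    rw [this]
    refine cfcn_norm_le hb fun x hx => ?_
    have hd := hδ n
    rw [abs_of_nonneg hx]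
    have e : Real.sqrt x - Real.sqrt x * (x / (x + δ n ^ 2)) = Real.sqrt x * δ n ^ 2 / (x + δ n ^ 2) := by
      field_simp; ring
    rw [e, abs_of_nonneg (by positivity), div_le_iff₀ (by positivity)]
    have h1 := Real.sqrt_nonneg x
    have h2 := Real.sq_sqrt hx
    nlinarith [mul_nonneg hd.le (sq_nonneg (Real.sqrt x - δ n)), mul_nonneg hd.le (mul_nonneg h1 hd.le)]
  have han : ∀ n, ‖sq a - sq a * u n‖ ≤ Real.sqrt C * δ n := fun n => by
    have := r_sub_ru ha hb (hus n) hC h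
    refine abs_le_of_sq_le_sq' (a := ‖sq a - sq a * u n‖) ?_ (mul_nonneg (Real.sqrt_nonneg _) (hδ n).le) |>.2
    rw [mul_pow, Real.sq_sqrt hC]
    refine this.trans (mul_le_mul_of_nonneg_left ?_ hC)
    exact pow_le_pow_left₀ (norm_nonneg _) (hbn n) 2
  refine ⟨fun n => g n * sq a, ?_⟩
  have hbound : ∀ n, ‖a - star (g n * sq a) * b * (g n * sq a)‖ ≤ (2 * ‖sq a‖ * Real.sqrt C) * δ n := by
    intro n
    have e1 : star (g n * sq a) * b * (g n * sq a) = sq a * u n * (u n * sq a) := by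
      rw [star_mul, sq_sa, hgs]
      conv_lhs => rw [← sq_mul_sq hb]
      calc sq a * g n * (sq b * sq b) * (g n * sq a) = sq a * (g n * sq b) * ((sq b * g n) * sq a) := by
            noncomm_ring
        _ = _ := by rw [hsg, hgs']
    have e2 : a - sq a * u n * (u n * sq a)
        = (sq a - sq a * u n) * sq a + sq a * u n * star (sq a - sq a * u n) := by
      rw [star_sub, star_mul, sq_sa, hus]
      nth_rewrite 1 [← sq_mul_sq ha]
      noncomm_ring
    rw [e1, e2]
    have n1 : ‖(sq a - sq a * u n) * sq a‖ ≤ Real.sqrt C * δ n * ‖sq a‖ :=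
      (norm_mul_le _ _).trans (mul_le_mul_of_nonneg_right (han n) (norm_nonneg _))
    have n2 : ‖sq a * u n * star (sq a - sq a * u n)‖ ≤ ‖sq a‖ * (Real.sqrt C * δ n) := by
      refine (norm_mul_le _ _).trans ?_
      rw [norm_star]
      refine mul_le_mul ?_ (han n) (norm_nonneg _) (norm_nonneg _)
      refine (norm_mul_le _ _).trans ?_
      have := mul_le_mul_of_nonneg_left (hun n) (norm_nonneg (sq a))
      simpa using this
    refine (norm_add_le _ _).trans ?_
    nlinarith
  refine squeeze_zero (fun n => norm_nonneg _) hbound ?_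
  have : Tendsto δ atTop (𝓝 0) := tendsto_one_div_add_atTop_nhds_zero_nat
  simpa using this.const_mul (2 * ‖sq a‖ * Real.sqrt C)

/-- Perturbation. -/
lemma cut_le_conj {a b : W} (ha : 0 ≤ a) (hb : 0 ≤ b) {t : ℝ} (ht : ‖a - b‖ < t) :
    ∃ k : W, star k = k ∧ cut t a ≤ k * b * k := by
  set r := ‖a - b‖ with hr
  have hr0 : 0 ≤ r := norm_nonneg _
  have ht0 : 0 < t := hr0.trans_lt ht
  let φ : ℝ → ℝ := fun x => Real.sqrt (max (x - t) 0 / max (x - r) (t - r))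
  have hpos : ∀ x : ℝ, 0 < max (x - r) (t - r) := fun x => lt_max_of_lt_right (by linarith)
  have hφ : Continuous φ := Real.continuous_sqrt.comp
    (Continuous.div (by fun_prop) (by fun_prop) (fun x => (hpos x).ne'))
  have hφ0 : φ 0 = 0 := by
    have : max (0 - t) 0 = 0 := max_eq_right (by linarith)
    simp only [φ, this]; simp
  have hφ2 : ∀ x, φ x * φ x = max (x - t) 0 / max (x - r) (t - r) := fun x =>
    Real.mul_self_sqrt (div_nonneg (le_max_right _ _) (hpos x).le)
  set k := cfcₙ φ a with hk
  have hks : star k = k := cfcn_star _ _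
  refine ⟨k, hks, ?_⟩
  have h1 := CStarAlgebra.star_left_conjugate_le_norm_smul (a := k) (b := a - b)
    ((IsSelfAdjoint.of_nonneg ha).sub (.of_nonneg hb))
  rw [hks, ← hr] at h1
  have e1 : k * k = cfcₙ (fun x => φ x * φ x) a := cfcn_mul' ha hφ hφ0 hφ hφ0 (fun _ _ => rfl)
  have e2 : k * a * k = cfcₙ (fun x => φ x * x * φ x) a := by
    have : a = cfcₙ (fun x : ℝ => x) a := (cfcn_id' ha fun _ _ => rfl).symm
    nth_rewrite 1 [this]
    rw [cfcn_mul' (h := fun x => φ x * x) ha hφ hφ0 (by fun_prop) rfl (fun _ _ => rfl)]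
    exact cfcn_mul' ha (by fun_prop) (by simp) hφ hφ0 (fun _ _ => rfl)
  have e3 : k * a * k - r • (k * k) = cut t a := by
    rw [e1, e2, ← cfcₙ_smul r (fun x => φ x * φ x) a (by fun_prop) (by simp [hφ0]),
      ← cfcₙ_sub _ _ a (by fun_prop) (by simp) (by fun_prop) (by simp [hφ0])]
    refine cfcn_eq ha fun x hx => ?_
    have : φ x * x * φ x - r • (φ x * φ x) = (x - r) * (φ x * φ x) := by
      simp only [smul_eq_mul]; ring
    rw [this, hφ2]
    rcases le_total x t with h | h
    · rw [max_eq_right (by linarith : x - t ≤ 0)]; simp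
    · rw [max_eq_left (by linarith : 0 ≤ x - t), max_eq_left (by linarith : t - r ≤ x - r)]
      have : x - r ≠ 0 := by intro h0; linarith
      field_simp
  have : k * b * k = k * a * k - k * (a - b) * k := by noncomm_ring
  rw [this, ← e3]
  exact sub_le_sub_left h1 _

/-! hereditary subalgebras -/

lemma her_closed (b : W) : IsClosed (her b) := isClosed_closure

lemma her_mul3 {b x y : W} (hx : x ∈ her b) (hy : y ∈ her b) (w : W) : x * w * y ∈ her b := by
  refine map_mem_closure₂ (f := fun x y : W => x * w * y) (by fun_prop) hx hy ?_
  rintro _ ⟨p, rfl⟩ _ ⟨q, rfl⟩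
  exact ⟨p * b * w * b * q, by noncomm_ring⟩

lemma her_mul {b x y : W} (hx : x ∈ her b) (hy : y ∈ her b) : x * y ∈ her b := by
  refine map_mem_closure₂ (f := fun x y : W => x * y) (by fun_prop) hx hy ?_
  rintro _ ⟨p, rfl⟩ _ ⟨q, rfl⟩
  exact ⟨p * b * b * q, by noncomm_ring⟩

lemma her_add {b x y : W} (hx : x ∈ her b) (hy : y ∈ her b) : x + y ∈ her b := by
  refine map_mem_closure₂ (f := fun x y : W => x + y) (by fun_prop) hx hy ?_
  rintro _ ⟨p, rfl⟩ _ ⟨q, rfl⟩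
  exact ⟨p + q, by noncomm_ring⟩

lemma her_sub {b x y : W} (hx : x ∈ her b) (hy : y ∈ her b) : x - y ∈ her b := by
  refine map_mem_closure₂ (f := fun x y : W => x - y) (by fun_prop) hx hy ?_
  rintro _ ⟨p, rfl⟩ _ ⟨q, rfl⟩
  exact ⟨p - q, by noncomm_ring⟩

lemma her_zero (b : W) : (0 : W) ∈ her b := subset_closure ⟨0, by simp⟩

lemma her_sum {ι : Type*} {b : W} (s : Finset ι) (f : ι → W) (h : ∀ i ∈ s, f i ∈ her b) :
    ∑ i ∈ s, f i ∈ her b := by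
  classical
  induction s using Finset.induction_on with
  | empty => simpa using her_zero b
  | insert a s ha ih =>
    rw [Finset.sum_insert ha]
    exact her_add (h a (by simp)) (ih fun i hi => h i (by simp [hi]))

lemma her_trans {b c : W} (hc : c ∈ her b) : her c ⊆ her b := by
  refine closure_minimal ?_ (her_closed b)
  rintro _ ⟨p, rfl⟩
  exact her_mul3 hc hc p

lemma her_orth {P b : W} (h : P * b = 0) {x : W} (hx : x ∈ her b) : P * x = 0 := by
  have : IsClosed {x : W | P * x = 0} := isClosed_eq (by fun_prop) (by fun_prop)
  refine closure_minimal (t := {x : W | P * x = 0}) ?_ this hx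
  rintro _ ⟨p, rfl⟩
  change P * (b * p * b) = 0
  rw [← mul_assoc, ← mul_assoc, h]; simp

lemma cut_tendsto {a : W} (ha : 0 ≤ a) :
    Tendsto (fun n : ℕ => cut (1 / ((n : ℝ) + 1)) a) atTop (𝓝 a) := by
  rw [tendsto_iff_norm_sub_tendsto_zero]
  refine squeeze_zero (fun n => norm_nonneg _) (fun n => ?_) tendsto_one_div_add_atTop_nhds_zero_nat
  rw [norm_sub_rev]
  exact cut_norm_sub (by positivity) ha

lemma her_cfcn {a : W} (ha : 0 ≤ a) (f : ℝ → ℝ) (hf : Continuous f) (hf0 : f 0 = 0) :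
    cfcₙ f a ∈ her a := by
  refine (her_closed a).mem_of_tendsto
    (cfcn_tendsto (fun n : ℕ => cut_nonneg (1 / ((n : ℝ) + 1)) ha) ha (cut_tendsto ha) f hf hf0)
    (Eventually.of_forall fun n => subset_closure ?_)
  have ht : (0 : ℝ) < 1 / ((n : ℝ) + 1) := by positivity
  generalize (1 : ℝ) / ((n : ℝ) + 1) = t at ht
  have hz : f (max (0 - t) 0) = 0 := by rw [max_eq_right (by linarith), hf0]
  have e : cfcₙ f (cut t a) = cfcₙ (fun x => f (max (x - t) 0)) a :=
    cfcn_comp' ha (by fun_prop) (by simpa using ht.le) hf hf0 (fun _ _ => rfl)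
  let ψ : ℝ → ℝ := fun x => f (max (x - t) 0) / max x t ^ 2
  have hpos : ∀ x : ℝ, 0 < max x t := fun x => lt_max_of_lt_right ht
  have hψ : Continuous ψ := Continuous.div (by fun_prop) (by fun_prop)
    (fun x => (pow_pos (hpos x) 2).ne')
  have hψ0 : ψ 0 = 0 := by simp only [ψ, hz]; simp
  refine ⟨cfcₙ ψ a, ?_⟩
  have e2 : a = cfcₙ (fun x : ℝ => x) a := (cfcn_id' ha fun _ _ => rfl).symm
  rw [e]
  have e3 : a * cfcₙ ψ a = cfcₙ (fun x => x * ψ x) a := by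
    nth_rewrite 1 [e2]
    exact cfcn_mul' ha (by fun_prop) rfl hψ hψ0 (fun _ _ => rfl)
  rw [e3]
  nth_rewrite 3 [e2]
  symm
  refine cfcn_mul' ha (by fun_prop) (by simp) (by fun_prop) rfl (fun x hx => ?_)
  simp only [ψ]
  rcases le_total x t with h | h
  · rw [max_eq_right (by linarith : x - t ≤ 0), hf0]; simp
  · rw [max_eq_left h]
    have : x ≠ 0 := by intro h0; linarith
    field_simp

lemma her_self {a : W} (ha : 0 ≤ a) : a ∈ her a := by
  have := her_cfcn ha (fun x => x) (by fun_prop) rfl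
  rwa [cfcn_id' ha (fun _ _ => rfl)] at this

section cutoff
lemma cutoff_cont (ε : ℝ) : Continuous (cutoff ε) := by unfold cutoff; fun_prop
lemma cutoff_zero (ε : ℝ) : cutoff ε 0 = 0 := by unfold cutoff; simp
lemma cutoff_nn (ε x : ℝ) : 0 ≤ cutoff ε x := le_min zero_le_one (le_max_left _ _)
lemma cutoff_le_one (ε x : ℝ) : cutoff ε x ≤ 1 := min_le_left _ _
lemma cutoff_eq_one {ε x : ℝ} (hε : 0 < ε) (h : ε ≤ x) : cutoff ε x = 1 := by
  unfold cutoff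
  refine min_eq_left (le_max_of_le_right ?_)
  have : 1 ≤ x / ε := (one_le_div hε).mpr h
  rw [mul_div_assoc]; linarith
lemma cutoff_eq_zero {ε x : ℝ} (hε : 0 < ε) (h : x ≤ ε / 2) : cutoff ε x = 0 := by
  unfold cutoff
  rw [max_eq_left, min_eq_right zero_le_one]
  have : 2 * x / ε ≤ 1 := (div_le_one hε).mpr (by linarith)
  linarith
lemma cutoff_anti {δ ε x : ℝ} (hδ : 0 < δ) (h : δ ≤ ε) (hx : 0 ≤ x) : cutoff ε x ≤ cutoff δ x := by
  unfold cutoff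
  gcongr
lemma cutoff_mono {ε x y : ℝ} (hε : 0 < ε) (h : x ≤ y) : cutoff ε x ≤ cutoff ε y := by
  unfold cutoff
  gcongr
lemma cutoff_le_lin {ε x : ℝ} (hε : 0 < ε) (h : 0 ≤ x) : cutoff ε x ≤ 2 / ε * x := by
  unfold cutoff
  refine (min_le_right _ _).trans (max_le (by positivity) ?_)
  have : 2 * x / ε = 2 / ε * x := by ring
  linarith
end cutoff

lemma fEps_nn (δ : ℝ) {a : W} (ha : 0 ≤ a) : 0 ≤ fEps δ a := cfcn_nn ha fun x _ => cutoff_nn δ x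

lemma fEps_norm (δ : ℝ) {a : W} (ha : 0 ≤ a) : ‖fEps δ a‖ ≤ 1 := cfcn_norm_le ha fun x _ => by
  rw [abs_of_nonneg (cutoff_nn _ _)]; exact cutoff_le_one _ _

variable (τ : QuasiTrace W)

lemma T_mono_comm {a b : W} (ha : 0 ≤ a) (hab : a ≤ b) (hc : a * b = b * a) :
    τ.toFun a ≤ τ.toFun b := by
  have := τ.map_add_of_commute a (b - a) ha (sub_nonneg.mpr hab) (by rw [mul_sub, sub_mul, hc])
  rw [add_sub_cancel] at this
  rw [this]; exact le_self_add

lemma T_cfcn_mono {f g : ℝ → ℝ} {a : W} (ha : 0 ≤ a) (hf : Continuous f) (hf0 : f 0 = 0)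
    (hg : Continuous g) (hg0 : g 0 = 0) (h0 : ∀ x, 0 ≤ x → 0 ≤ f x) (h : ∀ x, 0 ≤ x → f x ≤ g x) :
    τ.toFun (cfcₙ f a) ≤ τ.toFun (cfcₙ g a) :=
  T_mono_comm τ (cfcn_nn ha h0) (cfcn_le ha hf hf0 hg hg0 h)
    ((cfcn_mul' (h := fun x => f x * g x) ha hf hf0 hg hg0 fun _ _ => rfl).trans
      (cfcn_mul' ha hg hg0 hf hf0 fun x _ => mul_comm _ _).symm)

lemma T_le_D {F : ℝ → ℝ} {a : W} (ha : 0 ≤ a) (hF : Continuous F) (hF0 : F 0 = 0) {δ : ℝ} (hδ : 0 < δ)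
    (h0 : ∀ x, 0 ≤ x → 0 ≤ F x) (h1 : ∀ x, 0 ≤ x → F x ≤ 1) (h : ∀ x, 0 ≤ x → x ≤ δ → F x = 0) :
    τ.toFun (cfcₙ F a) ≤ dTau τ a := by
  obtain ⟨n, hn⟩ := exists_nat_one_div_lt hδ
  refine le_trans ?_ (le_iSup _ n)
  refine T_cfcn_mono τ ha hF hF0 (cutoff_cont _) (cutoff_zero _) h0 fun x hx => ?_
  rcases le_total x δ with hh | hh
  · rw [h x hx hh]; exact cutoff_nn _ _
  · rw [cutoff_eq_one (by positivity) (hn.le.trans hh)]; exact h1 x hx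

lemma T_fEps_le_D {a : W} (ha : 0 ≤ a) {δ : ℝ} (hδ : 0 < δ) : τ.toFun (fEps δ a) ≤ dTau τ a :=
  T_le_D τ ha (cutoff_cont _) (cutoff_zero _) (half_pos hδ) (fun x _ => cutoff_nn _ _)
    (fun x _ => cutoff_le_one _ _) (fun x _ h => cutoff_eq_zero hδ h)

lemma D_cut_le_T {F : ℝ → ℝ} {a : W} (ha : 0 ≤ a) (hF : Continuous F) (hF0 : F 0 = 0) {δ : ℝ} (hδ : 0 ≤ δ)
    (h0 : ∀ x, 0 ≤ x → 0 ≤ F x) (h1 : ∀ x, δ ≤ x → 1 ≤ F x) :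
    dTau τ (cut δ a) ≤ τ.toFun (cfcₙ F a) := by
  refine iSup_le fun n => ?_
  have e : fEps (1 / ((n : ℝ) + 1)) (cut δ a)
      = cfcₙ (fun x => cutoff (1 / ((n : ℝ) + 1)) (max (x - δ) 0)) a :=
    cfcn_comp' ha (by fun_prop) (by simpa using hδ) (cutoff_cont _) (cutoff_zero _) (fun _ _ => rfl)
  rw [e]
  have hz : max (0 - δ) 0 = 0 := max_eq_right (by linarith)
  refine T_cfcn_mono τ ha ((cutoff_cont _).comp (by fun_prop)) (by simp only [hz, cutoff_zero]) hF hF0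
    (fun x _ => cutoff_nn _ _) fun x hx => ?_
  rcases le_total x δ with hh | hh
  · rw [max_eq_right (by linarith), cutoff_zero]; exact h0 x hx
  · exact (cutoff_le_one _ _).trans (h1 x hh)

lemma T_le_D_cut {F : ℝ → ℝ} {a : W} (ha : 0 ≤ a) (hF : Continuous F) (hF0 : F 0 = 0) {s s' : ℝ}
    (hs0 : 0 ≤ s) (hs : s < s')
    (h0 : ∀ x, 0 ≤ x → 0 ≤ F x) (h1 : ∀ x, 0 ≤ x → F x ≤ 1) (h : ∀ x, 0 ≤ x → x ≤ s' → F x = 0) :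
    τ.toFun (cfcₙ F a) ≤ dTau τ (cut s a) := by
  have hz : max (0 - s) 0 = 0 := max_eq_right (by linarith)
  have hp : 0 < s' - s := by linarith
  refine le_trans ?_ (T_fEps_le_D τ (cut_nonneg s ha) hp)
  have e : fEps (s' - s) (cut s a) = cfcₙ (fun x => cutoff (s' - s) (max (x - s) 0)) a :=
    cfcn_comp' ha (by fun_prop) (by simpa using hs0) (cutoff_cont _) (cutoff_zero _) (fun _ _ => rfl)
  rw [e]
  refine T_cfcn_mono τ ha hF hF0 ((cutoff_cont _).comp (by fun_prop)) (by simp only [hz, cutoff_zero])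
    h0 fun x hx => ?_
  rcases le_total x s' with hh | hh
  · rw [h x hx hh]; exact cutoff_nn _ _
  · rw [max_eq_left (by linarith), cutoff_eq_one hp (by linarith)]; exact h1 x hx

lemma D_le_of_cut {a : W} (ha : 0 ≤ a) {C : ℝ≥0∞} (h : ∀ n : ℕ, dTau τ (cut (1 / ((n : ℝ) + 1)) a) ≤ C) :
    dTau τ a ≤ C := by
  refine iSup_le fun n => ?_
  have h1 : (0 : ℝ) < 1 / ((n : ℝ) + 1) := by positivity
  obtain ⟨m, hm⟩ := exists_nat_one_div_lt (half_pos (half_pos h1))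
  refine le_trans ?_ (h m)
  exact T_le_D_cut τ ha (cutoff_cont _) (cutoff_zero _) (by positivity) (s' := 1 / ((n : ℝ) + 1) / 2)
    (by linarith) (fun x _ => cutoff_nn _ _)
    (fun x _ => cutoff_le_one _ _) (fun x _ h => cutoff_eq_zero h1 h)

lemma D_cfcn_mono {f g : ℝ → ℝ} {a : W} (ha : 0 ≤ a) (hf : Continuous f) (hf0 : f 0 = 0)
    (hg : Continuous g) (hg0 : g 0 = 0) (h0 : ∀ x, 0 ≤ x → 0 ≤ f x) (h : ∀ x, 0 ≤ x → f x ≤ g x) :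
    dTau τ (cfcₙ f a) ≤ dTau τ (cfcₙ g a) := by
  refine iSup_mono fun n => ?_
  unfold fEps
  rw [cfcn_comp' (h := fun x => cutoff (1 / ((n : ℝ) + 1)) (f x)) ha hf hf0 (cutoff_cont _) (cutoff_zero _)
    (fun _ _ => rfl), cfcn_comp' (h := fun x => cutoff (1 / ((n : ℝ) + 1)) (g x)) ha hg hg0
    (cutoff_cont _) (cutoff_zero _) (fun _ _ => rfl)]
  exact T_cfcn_mono τ ha ((cutoff_cont _).comp hf) (by simp [hf0, cutoff_zero]) ((cutoff_cont _).comp hg)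
    (by simp [hg0, cutoff_zero]) (fun x _ => cutoff_nn _ _)
    (fun x hx => cutoff_mono (by positivity) (h x hx))

lemma D_cut_anti {s t : ℝ} (hs : 0 ≤ s) (h : s ≤ t) {a : W} (ha : 0 ≤ a) :
    dTau τ (cut t a) ≤ dTau τ (cut s a) :=
  D_cfcn_mono τ ha (by fun_prop) (by simpa using hs.trans h) (by fun_prop) (by simpa using hs)
    (fun x _ => le_max_right _ _) (fun x _ => by gcongr)

lemma cut_zero_eq {a : W} (ha : 0 ≤ a) : cut 0 a = a :=
  cfcn_id' ha fun x hx => by simpa using hx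

lemma D_cut_le {t : ℝ} (h : 0 ≤ t) {a : W} (ha : 0 ≤ a) : dTau τ (cut t a) ≤ dTau τ a := by
  have := D_cut_anti τ le_rfl h ha
  rwa [cut_zero_eq ha] at this

lemma T_sum_orth {ι : Type*} (s : Finset ι) (f : ι → W) (h0 : ∀ i ∈ s, 0 ≤ f i)
    (ho : ∀ i ∈ s, ∀ j ∈ s, i ≠ j → f i * f j = 0) : τ.toFun (∑ i ∈ s, f i) = ∑ i ∈ s, τ.toFun (f i) := by
  classical
  induction s using Finset.induction_on with
  | empty => simpa using τ.map_zero
  | insert a s ha ih =>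
    rw [Finset.sum_insert ha, Finset.sum_insert ha, τ.map_add_of_commute, ih]
    · exact fun i hi => h0 i (by simp [hi])
    · exact fun i hi j hj => ho i (by simp [hi]) j (by simp [hj])
    · exact h0 a (by simp)
    · exact Finset.sum_nonneg fun i hi => h0 i (by simp [hi])
    · rw [Finset.mul_sum, Finset.sum_mul]
      refine (Finset.sum_eq_zero fun i hi => ?_).trans (Finset.sum_eq_zero fun i hi => ?_).symm
      · exact ho a (by simp) i (by simp [hi]) (fun h => ha (h ▸ hi))
      · exact ho i (by simp [hi]) a (by simp) (fun h => ha (h ▸ hi))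

lemma cfcn_sum_orth {ι : Type*} (s : Finset ι) (f : ι → W) (h0 : ∀ i ∈ s, 0 ≤ f i)
    (ho : ∀ i ∈ s, ∀ j ∈ s, i ≠ j → f i * f j = 0) (F : ℝ → ℝ) (hF : Continuous F) (hF0 : F 0 = 0) :
    cfcₙ F (∑ i ∈ s, f i) = ∑ i ∈ s, cfcₙ F (f i) := by
  classical
  induction s using Finset.induction_on with
  | empty => simp
  | insert a s ha ih =>
    rw [Finset.sum_insert ha, Finset.sum_insert ha, cfcn_add_orth, ih]
    · exact fun i hi => h0 i (by simp [hi])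
    · exact fun i hi j hj => ho i (by simp [hi]) j (by simp [hj])
    · exact .of_nonneg (h0 a (by simp))
    · exact .of_nonneg (Finset.sum_nonneg fun i hi => h0 i (by simp [hi]))
    · rw [Finset.mul_sum]
      exact Finset.sum_eq_zero fun i hi => ho a (by simp) i (by simp [hi]) (fun h => ha (h ▸ hi))
    · exact hF
    · exact hF0

lemma cfcn_orth {a b : W} (ha : 0 ≤ a) (hb : 0 ≤ b) (h : a * b = 0) {F G : ℝ → ℝ} (hF : Continuous F)
    (hF0 : F 0 = 0) (hG : Continuous G) (hG0 : G 0 = 0) : cfcₙ F a * cfcₙ G b = 0 :=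
  cfcn_mul_eq_zero (.of_nonneg ha) (mul_cfcn_eq_zero (.of_nonneg hb) h G hG hG0) F hF hF0

lemma T_cfcn_sum_orth {ι : Type*} (s : Finset ι) (f : ι → W) (h0 : ∀ i ∈ s, 0 ≤ f i)
    (ho : ∀ i ∈ s, ∀ j ∈ s, i ≠ j → f i * f j = 0) (F : ℝ → ℝ) (hF : Continuous F) (hF0 : F 0 = 0)
    (hFn : ∀ x, 0 ≤ x → 0 ≤ F x) :
    τ.toFun (cfcₙ F (∑ i ∈ s, f i)) = ∑ i ∈ s, τ.toFun (cfcₙ F (f i)) := by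
  rw [cfcn_sum_orth s f h0 ho F hF hF0, T_sum_orth]
  · exact fun i hi => cfcn_nn (h0 i hi) hFn
  · exact fun i hi j hj hij => cfcn_orth (h0 i hi) (h0 j hj) (ho i hi j hj hij) hF hF0 hF hF0

lemma T_fEps_mono {a : W} (ha : 0 ≤ a) {δ ε : ℝ} (hδ : 0 < δ) (h : δ ≤ ε) :
    τ.toFun (fEps ε a) ≤ τ.toFun (fEps δ a) :=
  T_cfcn_mono τ ha (cutoff_cont _) (cutoff_zero _) (cutoff_cont _) (cutoff_zero _)
    (fun x _ => cutoff_nn _ _) (fun x hx => cutoff_anti hδ h hx)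

lemma D_seq_mono {a : W} (ha : 0 ≤ a) : Monotone fun n : ℕ => τ.toFun (fEps (1 / ((n : ℝ) + 1)) a) := by
  intro m n h
  refine T_fEps_mono τ ha (by positivity) ?_
  gcongr

lemma D_sum_orth {ι : Type*} (s : Finset ι) (f : ι → W) (h0 : ∀ i ∈ s, 0 ≤ f i)
    (ho : ∀ i ∈ s, ∀ j ∈ s, i ≠ j → f i * f j = 0) : dTau τ (∑ i ∈ s, f i) = ∑ i ∈ s, dTau τ (f i) := by
  unfold dTau
  rw [← Finset.sum_coe_sort s (fun i => ⨆ n : ℕ, τ.toFun (fEps (1 / ((n : ℝ) + 1)) (f i))),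
    ENNReal.finsetSum_iSup_of_monotone (s := Finset.univ)
      (f := fun (i : s) (n : ℕ) => τ.toFun (fEps (1 / ((n : ℝ) + 1)) (f i)))]
  · refine iSup_congr fun n => ?_
    rw [Finset.sum_coe_sort s (fun i => τ.toFun (fEps (1 / ((n : ℝ) + 1)) (f i)))]
    exact T_cfcn_sum_orth τ s f h0 ho _ (cutoff_cont _) (cutoff_zero _) (fun x _ => cutoff_nn _ _)
  · exact fun i => D_seq_mono τ (h0 i i.2)

lemma T_star {F : ℝ → ℝ} (hF : Continuous F) (h0 : ∀ x, 0 ≤ F x) {s : ℝ} (hs : 0 < s)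
    (h : ∀ x, x ≤ s → F x = 0) (z : W) : τ.toFun (cfcₙ F (star z * z)) = τ.toFun (cfcₙ F (z * star z)) := by
  let k : ℝ → ℝ := fun x => Real.sqrt (F x / max x s)
  have hpos : ∀ x : ℝ, 0 < max x s := fun x => lt_max_of_lt_right hs
  have hk : Continuous k := Real.continuous_sqrt.comp
    (Continuous.div (by fun_prop) (by fun_prop) (fun x => (hpos x).ne'))
  have hF0 : F 0 = 0 := h 0 hs.le
  have hk0 : k 0 = 0 := by simp [k, hF0]
  have hk2 : ∀ x, k x * k x = F x / max x s := fun x =>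
    Real.mul_self_sqrt (div_nonneg (h0 x) (hpos x).le)
  have hkx : ∀ x, k x * k x * x = F x := fun x => by
    rw [hk2]
    rcases le_total x s with hh | hh
    · rw [h x hh]; simp
    · rw [max_eq_left hh]
      have : x ≠ 0 := by intro h0; linarith
      field_simp
  have p1 : 0 ≤ star z * z := star_mul_self_nonneg z
  have p2 : 0 ≤ z * star z := mul_star_self_nonneg z
  have idn : ∀ a : W, 0 ≤ a → a = cfcₙ (fun x : ℝ => x) a := fun a ha => (cfcn_id' ha fun _ _ => rfl).symm
  have key := τ.map_star_mul_self (z * cfcₙ k (star z * z))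
  have sc : ∀ g : ℝ → ℝ, Continuous g → g 0 = 0 → z * cfcₙ g (star z * z) = cfcₙ g (z * star z) * z :=
    fun g hg hg0 => semiconj_cfcn (.of_nonneg p1) (.of_nonneg p2) (by noncomm_ring) g hg hg0
  have e1 : star (z * cfcₙ k (star z * z)) * (z * cfcₙ k (star z * z)) = cfcₙ F (star z * z) := by
    rw [star_mul, cfcn_star]
    calc cfcₙ k (star z * z) * star z * (z * cfcₙ k (star z * z))
        = cfcₙ k (star z * z) * (star z * z) * cfcₙ k (star z * z) := by noncomm_ring
      _ = cfcₙ k (star z * z) * cfcₙ (fun x : ℝ => x) (star z * z) * cfcₙ k (star z * z) := by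
          rw [← idn _ p1]
      _ = _ := by
        rw [cfcn_mul' (h := fun x => k x * x) p1 hk hk0 (by fun_prop) rfl (fun _ _ => rfl)]
        exact cfcn_mul' p1 (by fun_prop) (by simp) hk hk0 (fun x _ => by rw [← hkx x]; ring)
  have e2 : (z * cfcₙ k (star z * z)) * star (z * cfcₙ k (star z * z)) = cfcₙ F (z * star z) := by
    rw [star_mul, cfcn_star, sc k hk hk0]
    calc cfcₙ k (z * star z) * z * (cfcₙ k (star z * z) * star z)
        = cfcₙ k (z * star z) * (z * cfcₙ k (star z * z)) * star z := by noncomm_ring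
      _ = cfcₙ k (z * star z) * cfcₙ k (z * star z) * (z * star z) := by
          rw [sc k hk hk0]; noncomm_ring
      _ = cfcₙ k (z * star z) * cfcₙ k (z * star z) * cfcₙ (fun x : ℝ => x) (z * star z) := by
          rw [← idn _ p2]
      _ = _ := by
        rw [cfcn_mul' (h := fun x => k x * k x) p2 hk hk0 hk hk0 (fun _ _ => rfl)]
        exact cfcn_mul' p2 (by fun_prop) (by simp [hk0]) (by fun_prop) rfl (fun x _ => hkx x)
  rwa [e1, e2] at key

lemma D_star (z : W) : dTau τ (star z * z) = dTau τ (z * star z) := by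
  refine iSup_congr fun n => ?_
  have h1 : (0 : ℝ) < 1 / ((n : ℝ) + 1) := by positivity
  exact T_star τ (cutoff_cont _) (fun x => cutoff_nn _ _) (half_pos h1) (fun x h => cutoff_eq_zero h1 h) z

lemma D_cut_star {t : ℝ} (ht : 0 ≤ t) (z : W) :
    dTau τ (cut t (star z * z)) = dTau τ (cut t (z * star z)) := by
  refine iSup_congr fun n => ?_
  have h1 : (0 : ℝ) < 1 / ((n : ℝ) + 1) := by positivity
  have e : ∀ a : W, 0 ≤ a → fEps (1 / ((n : ℝ) + 1)) (cut t a)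
      = cfcₙ (fun x => cutoff (1 / ((n : ℝ) + 1)) (max (x - t) 0)) a := fun a ha =>
    cfcn_comp' ha (by fun_prop) (by simpa using ht) (cutoff_cont _) (cutoff_zero _) (fun _ _ => rfl)
  rw [e _ (star_mul_self_nonneg z), e _ (mul_star_self_nonneg z)]
  refine T_star τ ((cutoff_cont _).comp (by fun_prop)) (fun x => cutoff_nn _ _) (half_pos h1)
    (fun x h => cutoff_eq_zero h1 ?_) z
  exact max_le (by linarith) (by linarith)

lemma T_lsc {y : ℕ → W} {y0 : W} (hy : ∀ n, 0 ≤ y n) (hy0 : 0 ≤ y0) (h : Tendsto y atTop (𝓝 y0))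
    {C : ℝ≥0∞} (hC : ∀ n, τ.toFun (y n) ≤ C) : τ.toFun y0 ≤ C := by
  by_contra hc
  push Not at hc
  have h1 := τ.lowerSemicontinuousOn y0 hy0 C hc
  have h2 : Tendsto y atTop (𝓝[{a : W | 0 ≤ a}] y0) :=
    tendsto_nhdsWithin_iff.mpr ⟨h, Eventually.of_forall hy⟩
  obtain ⟨n, hn⟩ := (h2.eventually h1).exists
  exact absurd (hC n) (not_le.mpr hn)

lemma D_lsc {y : ℕ → W} {y0 : W} (hy : ∀ n, 0 ≤ y n) (hy0 : 0 ≤ y0) (h : Tendsto y atTop (𝓝 y0))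
    {C : ℝ≥0∞} (hC : ∀ n, dTau τ (y n) ≤ C) : dTau τ y0 ≤ C := by
  refine iSup_le fun m => ?_
  refine T_lsc τ (fun n => fEps_nn _ (hy n)) (fEps_nn _ hy0)
    (cfcn_tendsto hy hy0 h _ (cutoff_cont _) (cutoff_zero _)) fun n => ?_
  exact (le_iSup (fun m : ℕ => τ.toFun (fEps (1 / ((m : ℝ) + 1)) (y n))) m).trans (hC n)

lemma D_conj {b : W} (hb : 0 ≤ b) (x : W) : dTau τ (star x * b * x) ≤ dTau τ b := by
  have hlim : Tendsto (fun n : ℕ => star x * cut (1 / ((n : ℝ) + 1)) b * x) atTop (𝓝 (star x * b * x)) :=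
    ((cut_tendsto hb).const_mul (star x)).mul_const x
  refine D_lsc τ (fun n => conj_nn (cut_nonneg _ hb) x) (conj_nn hb x) hlim fun n => ?_
  have hs : (0 : ℝ) < 1 / ((n : ℝ) + 1) := by positivity
  generalize (1 : ℝ) / ((n : ℝ) + 1) = s at hs
  have hm0 : max (0 - s) 0 = 0 := max_eq_right (by linarith)
  let w : W := cfcₙ (fun x : ℝ => Real.sqrt (max (x - s) 0)) b
  let v : W := cfcₙ (fun x : ℝ => Real.sqrt (cutoff s x)) b
  have hcv : Continuous fun x : ℝ => Real.sqrt (cutoff s x) := Real.continuous_sqrt.comp (cutoff_cont s)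
  have hv0 : Real.sqrt (cutoff s 0) = 0 := by rw [cutoff_zero]; simp
  have hws : star w = w := cfcn_star _ _
  have hvs : star v = v := cfcn_star _ _
  have hvw : v * w = w := cfcn_mul' hb hcv hv0 (by fun_prop) (by simp [hs.le]) fun x hx => by
    rcases le_total x s with hh | hh
    · rw [max_eq_right (by linarith)]; simp
    · rw [cutoff_eq_one hs hh]; simp
  have hww : w * w = cut s b := cfcn_mul' hb (by fun_prop) (by simp [hs.le]) (by fun_prop) (by simp [hs.le])
    fun x hx => Real.mul_self_sqrt (le_max_right _ _)
  have hvv : v * v = fEps s b := cfcn_mul' hb hcv hv0 hcv hv0 fun x hx =>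
    Real.mul_self_sqrt (cutoff_nn _ _)
  have e1 : star x * cut s b * x = star (w * x) * (w * x) := by
    rw [star_mul, hws, ← hww]; noncomm_ring
  rw [e1, D_star]
  set z := w * x with hz
  have hvz : v * z = z := by rw [hz, ← mul_assoc, hvw]
  refine iSup_le fun m => ?_
  set F := fEps (1 / ((m : ℝ) + 1)) (z * star z) with hF
  have hvF : v * F = F := by
    have hcl : IsClosed {y : W | v * y = y} := isClosed_eq (by fun_prop) (by fun_prop)
    refine closure_minimal (t := {y : W | v * y = y}) ?_ hcl
      (her_cfcn (mul_star_self_nonneg z) _ (cutoff_cont _) (cutoff_zero _))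
    rintro _ ⟨p, rfl⟩
    change v * (z * star z * p * (z * star z)) = _
    simp only [← mul_assoc, hvz]
  have hFs : star F = F := cfcn_star _ _
  have hFv : F * v = F := by
    have := congrArg star hvF
    rwa [star_mul, hvs, hFs] at this
  have hFn : 0 ≤ F := fEps_nn _ (mul_star_self_nonneg z)
  have hle : F ≤ v * v := by
    have := CStarAlgebra.star_left_conjugate_le_norm_smul (a := v) (b := F) (.of_nonneg hFn)
    rw [hvs, hvF, hFv] at this
    refine this.trans ?_
    have h2 : 0 ≤ v * v := by rw [hvv]; exact fEps_nn _ hb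
    have h3 := fEps_norm (1 / ((m : ℝ) + 1)) (mul_star_self_nonneg z)
    calc ‖F‖ • (v * v) ≤ (1 : ℝ) • (v * v) := smul_le_smul_of_nonneg_right h3 h2
      _ = _ := one_smul _ _
  refine (T_mono_comm τ hFn hle (by rw [← mul_assoc, hFv, hFv, mul_assoc, hvF, hvF])).trans ?_
  rw [hvv]
  exact T_fEps_le_D τ hb hs

lemma D_of_cuntz {a b : W} (ha : 0 ≤ a) (hb : 0 ≤ b) (h : CuntzLE a b) : dTau τ a ≤ dTau τ b := by
  obtain ⟨x, hx⟩ := h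
  refine D_lsc τ (fun n => conj_nn hb (x n)) ha ?_ fun n => D_conj τ hb (x n)
  rw [tendsto_iff_norm_sub_tendsto_zero]
  simpa only [norm_sub_rev] using hx

lemma D_of_le {a b : W} (ha : 0 ≤ a) (hb : 0 ≤ b) {C : ℝ} (hC : 0 ≤ C) (h : a ≤ C • b) :
    dTau τ a ≤ dTau τ b := D_of_cuntz τ ha hb (cuntz_of_le ha hb hC h)

lemma D_of_le' {a b : W} (ha : 0 ≤ a) (hb : 0 ≤ b) (h : a ≤ b) :
    dTau τ a ≤ dTau τ b := D_of_le τ ha hb zero_le_one (by rwa [one_smul])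

lemma D_cut_of_near {a b : W} (ha : 0 ≤ a) (hb : 0 ≤ b) {t : ℝ} (ht : ‖a - b‖ < t) :
    dTau τ (cut t a) ≤ dTau τ b := by
  obtain ⟨k, hk, hle⟩ := cut_le_conj ha hb ht
  have := conj_nn hb k
  rw [hk] at this
  refine (D_of_le' τ (cut_nonneg t ha) this hle).trans ?_
  have := D_conj τ hb k
  rwa [hk] at this

/-- variant with cut on the right -/
lemma D_cut_of_near' {a b : W} (ha : 0 ≤ a) (hb : 0 ≤ b) {t s : ℝ} (hs : 0 ≤ s) (ht : ‖a - b‖ + s < t) :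
    dTau τ (cut t a) ≤ dTau τ (cut s b) := by
  refine D_cut_of_near τ ha (cut_nonneg s hb) ?_
  calc ‖a - cut s b‖ = ‖(a - b) + (b - cut s b)‖ := by congr 1; abel
    _ ≤ ‖a - b‖ + ‖b - cut s b‖ := norm_add_le _ _
    _ ≤ ‖a - b‖ + s := by gcongr; exact cut_norm_sub hs hb
    _ < t := ht

lemma D_cut_of_cuntz {a b : W} (ha : 0 ≤ a) (hb : 0 ≤ b) (h : CuntzLE a b) {t : ℝ} (ht : 0 < t) :
    ∃ s : ℝ, 0 < s ∧ ∀ τ : QuasiTrace W, dTau τ (cut t a) ≤ dTau τ (cut s b) := by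
  obtain ⟨x, hx⟩ := h
  obtain ⟨n, hn⟩ := (hx.eventually (gt_mem_nhds (half_pos ht))).exists
  set y := x n
  have hp : 0 < 2 * (‖y‖ ^ 2 + 1) := by positivity
  refine ⟨t / (2 * (‖y‖ ^ 2 + 1)), by positivity, fun τ => ?_⟩
  set s := t / (2 * (‖y‖ ^ 2 + 1)) with hs
  have hs0 : 0 < s := by positivity
  have hst : s * (‖y‖ ^ 2 + 1) = t / 2 := by rw [hs]; field_simp
  refine (D_cut_of_near τ ha (conj_nn (cut_nonneg s hb) y) ?_).trans (D_conj τ (cut_nonneg s hb) y)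
  have e : a - star y * cut s b * y = (a - star y * b * y) + star y * (b - cut s b) * y := by noncomm_ring
  have n1 : ‖star y * (b - cut s b) * y‖ ≤ s * ‖y‖ ^ 2 := by
    calc ‖star y * (b - cut s b) * y‖ ≤ ‖star y‖ * ‖b - cut s b‖ * ‖y‖ := norm_mul₃_le
      _ ≤ ‖y‖ * s * ‖y‖ := by
        rw [norm_star]; gcongr; exact cut_norm_sub hs0.le hb
      _ = s * ‖y‖ ^ 2 := by ring
  rw [e]
  refine (norm_add_le _ _).trans_lt ?_
  nlinarith

/-- copies of an element, orthogonal for different indices -/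
def cpy (L : ℕ → W → W) (k : ℕ) (a : W) : W := L k (sq a) * star (L k (sq a))

def IsCopies (L : ℕ → W → W) : Prop :=
  ∀ k l x y, star (L k x) * L l y = if k = l then star x * y else 0

section copies
variable {L : ℕ → W → W} (hL : IsCopies L)

lemma cpy_nn (L : ℕ → W → W) (k : ℕ) (a : W) : 0 ≤ cpy L k a := mul_star_self_nonneg _

lemma D_cpy (hL : IsCopies L) (τ : QuasiTrace W) (k : ℕ) {a : W} (ha : 0 ≤ a) :
    dTau τ (cpy L k a) = dTau τ a := by
  unfold cpy
  rw [← D_star, hL, if_pos rfl, sq_sa, sq_mul_sq ha]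

lemma D_cut_cpy (hL : IsCopies L) (τ : QuasiTrace W) (k : ℕ) {a : W} (ha : 0 ≤ a) {t : ℝ} (ht : 0 ≤ t) :
    dTau τ (cut t (cpy L k a)) = dTau τ (cut t a) := by
  unfold cpy
  rw [← D_cut_star τ ht, hL, if_pos rfl, sq_sa, sq_mul_sq ha]

lemma cpy_orth (hL : IsCopies L) {k l : ℕ} (h : k ≠ l) (a b : W) : cpy L k a * cpy L l b = 0 := by
  unfold cpy
  calc L k (sq a) * star (L k (sq a)) * (L l (sq b) * star (L l (sq b)))
      = L k (sq a) * (star (L k (sq a)) * L l (sq b)) * star (L l (sq b)) := by noncomm_ring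
    _ = 0 := by rw [hL, if_neg h]; simp

lemma cuntz_pre (hL : IsCopies L) {a b : W} (ha : 0 ≤ a) (hb : 0 ≤ b) :
    ∃ v : W, star v * v = a + b ∧ CuntzLE (v * star v) (cpy L 0 a + cpy L 1 b) := by
  refine ⟨L 0 (sq a) + L 1 (sq b), ?_, ?_⟩
  · rw [star_add, add_mul, mul_add, mul_add, hL, hL, hL, hL]
    simp [sq_sa, sq_mul_sq ha, sq_mul_sq hb]
  · refine cuntz_of_le (mul_star_self_nonneg _) (add_nonneg (cpy_nn _ _ _) (cpy_nn _ _ _))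
      zero_le_two ?_
    rw [← sub_nonneg]
    have : (2 : ℝ) • (cpy L 0 a + cpy L 1 b) - (L 0 (sq a) + L 1 (sq b)) * star (L 0 (sq a) + L 1 (sq b))
        = (L 0 (sq a) - L 1 (sq b)) * star (L 0 (sq a) - L 1 (sq b)) := by
      unfold cpy
      rw [two_smul, star_sub, star_add]
      noncomm_ring
    rw [this]; exact mul_star_self_nonneg _

lemma D_add_le (hL : IsCopies L) (τ : QuasiTrace W) {a b : W} (ha : 0 ≤ a) (hb : 0 ≤ b) :
    dTau τ (a + b) ≤ dTau τ a + dTau τ b := by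
  obtain ⟨v, hv, hc⟩ := cuntz_pre hL ha hb
  rw [← hv, D_star]
  refine (D_of_cuntz τ (mul_star_self_nonneg _) (add_nonneg (cpy_nn _ _ _) (cpy_nn _ _ _)) hc).trans ?_
  have := D_sum_orth τ Finset.univ (f := ![cpy L 0 a, cpy L 1 b])
    (by intro i _; fin_cases i <;> exact cpy_nn _ _ _)
    (by intro i _ j _ hij; fin_cases i <;> fin_cases j <;> simp_all [cpy_orth hL])
  simp only [Fin.sum_univ_two, Matrix.cons_val_zero, Matrix.cons_val_one] at this
  rw [this, D_cpy hL τ _ ha, D_cpy hL τ _ hb]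

lemma D_cut_add (hL : IsCopies L) {a b : W} (ha : 0 ≤ a) (hb : 0 ≤ b) {t : ℝ} (ht : 0 < t) :
    ∃ s : ℝ, 0 < s ∧ ∀ τ : QuasiTrace W, dTau τ (cut t (a + b)) ≤ dTau τ (cut s a) + dTau τ (cut s b) := by
  obtain ⟨v, hv, hc⟩ := cuntz_pre hL ha hb
  obtain ⟨s, hs, h⟩ := D_cut_of_cuntz (mul_star_self_nonneg _)
    (add_nonneg (cpy_nn _ _ _) (cpy_nn _ _ _)) hc ht
  refine ⟨s, hs, fun τ => ?_⟩
  rw [← hv, D_cut_star τ ht.le]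
  refine (h τ).trans ?_
  rw [cut_add_orth hs.le (cpy_nn _ _ _) (cpy_nn _ _ _) (cpy_orth hL zero_ne_one _ _)]
  have z : max (0 - s) 0 = 0 := max_eq_right (by linarith)
  have ho : ∀ k l : ℕ, k ≠ l → ∀ a b : W, cut s (cpy L k a) * cut s (cpy L l b) = 0 :=
    fun k l hkl a b => cfcn_orth (cpy_nn _ _ _) (cpy_nn _ _ _) (cpy_orth hL hkl a b) (by fun_prop) z (by fun_prop) z
  have := D_sum_orth τ Finset.univ (f := ![cut s (cpy L 0 a), cut s (cpy L 1 b)])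
    (by intro i _; fin_cases i <;> exact cut_nonneg _ (cpy_nn _ _ _))
    (by intro i _ j _ hij; fin_cases i <;> fin_cases j <;> simp_all)
  simp only [Fin.sum_univ_two, Matrix.cons_val_zero, Matrix.cons_val_one] at this
  rw [this, D_cut_cpy hL τ _ ha hs.le, D_cut_cpy hL τ _ hb hs.le]

lemma add_sq_le (x y : W) : star (x + y) * (x + y) ≤ (2 : ℝ) • (star x * x + star y * y) := by
  rw [← sub_nonneg]
  have : (2 : ℝ) • (star x * x + star y * y) - star (x + y) * (x + y) = star (x - y) * (x - y) := by
    rw [two_smul, star_sub, star_add]; noncomm_ring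
  rw [this]; exact star_mul_self_nonneg _

lemma D_ideal_add (hL : IsCopies L) (τ : QuasiTrace W) (x y : W) :
    dTau τ (star (x + y) * (x + y)) ≤ dTau τ (star x * x) + dTau τ (star y * y) :=
  (D_of_le τ (star_mul_self_nonneg _) (add_nonneg (star_mul_self_nonneg _) (star_mul_self_nonneg _))
    zero_le_two (add_sq_le x y)).trans (D_add_le hL τ (star_mul_self_nonneg _) (star_mul_self_nonneg _))

lemma D_ideal_right (τ : QuasiTrace W) (x y : W) :
    dTau τ (star (x * y) * (x * y)) ≤ dTau τ (star x * x) := by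
  have : star (x * y) * (x * y) = star y * (star x * x) * y := by rw [star_mul]; noncomm_ring
  rw [this]; exact D_conj τ (star_mul_self_nonneg _) y

lemma D_ideal_left (τ : QuasiTrace W) (x y : W) :
    dTau τ (star (y * x) * (y * x)) ≤ dTau τ (star x * x) := by
  rw [D_star, D_star τ x]
  have : (y * x) * star (y * x) = star (star y) * (x * star x) * star y := by
    rw [star_mul, star_star]; noncomm_ring
  rw [this]; exact D_conj τ (mul_star_self_nonneg _) _

end copies

/-! ### stabilization -/
section stab

def stF (SB : Stabilization A W) : ((ℕ × ℕ) →₀ A) →ₗ[ℂ] W :=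
  Finsupp.lsum ℂ (fun p : ℕ × ℕ => SB.emb p.1 p.2)

def stFk (SB : Stabilization A W) (k : ℕ) : ((ℕ × ℕ) →₀ A) →ₗ[ℂ] W :=
  Finsupp.lsum ℂ (fun p : ℕ × ℕ => SB.emb (Nat.pair k p.1) p.2)

lemma stF_single (SB : Stabilization A W) (p : ℕ × ℕ) (a : A) :
    stF SB (Finsupp.single p a) = SB.emb p.1 p.2 a := by simp [stF]

lemma stFk_single (SB : Stabilization A W) (k : ℕ) (p : ℕ × ℕ) (a : A) :
    stFk SB k (Finsupp.single p a) = SB.emb (Nat.pair k p.1) p.2 a := by simp [stFk]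

lemma stF_dense (SB : Stabilization A W) : DenseRange (stF SB) := by
  refine SB.dense_span.mono ?_
  have : Submodule.span ℂ {w : W | ∃ (i j : ℕ) (a : A), w = SB.emb i j a} ≤ LinearMap.range (stF SB) := by
    rw [Submodule.span_le]
    rintro _ ⟨i, j, a, rfl⟩
    exact ⟨Finsupp.single (i, j) a, stF_single SB (i, j) a⟩
  exact this

lemma stFk_ip (SB : Stabilization A W) (k l : ℕ) (u v : (ℕ × ℕ) →₀ A) :
    star (stFk SB k u) * stFk SB l v = if k = l then star (stF SB u) * stF SB v else 0 := by
  induction u using Finsupp.induction_linear with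
  | zero => simp
  | add u u' h h' =>
    rw [map_add, map_add, star_add, star_add, add_mul, add_mul, h, h']
    split_ifs <;> simp
  | single p a =>
    induction v using Finsupp.induction_linear with
    | zero => simp
    | add u u' h h' =>
      rw [map_add, map_add, mul_add, mul_add, h, h']
      split_ifs <;> simp
    | single q b =>
      rw [stFk_single, stFk_single, stF_single, stF_single, SB.emb_star, SB.emb_mul, SB.emb_star,
        SB.emb_mul]
      by_cases h : k = l <;> by_cases h' : p.1 = q.1 <;> simp [h, h', Nat.pair_eq_pair]

lemma stFk_norm (SB : Stabilization A W) (k : ℕ) (u : (ℕ × ℕ) →₀ A) : ‖stFk SB k u‖ = ‖stF SB u‖ := by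
  have h := congrArg norm (stFk_ip SB k k u u)
  rw [if_pos rfl, CStarRing.norm_star_mul_self, CStarRing.norm_star_mul_self] at h
  nlinarith [norm_nonneg (stFk SB k u), norm_nonneg (stF SB u)]

lemma exists_copies (SB : Stabilization A W) : ∃ L : ℕ → W → W, IsCopies L := by
  have hn : ∀ k, ∃ C, ∀ x, ‖stFk SB k x‖ ≤ C * ‖stF SB x‖ := fun k =>
    ⟨1, fun x => by rw [one_mul, stFk_norm]⟩
  refine ⟨fun k => (stFk SB k).extendOfNorm (stF SB), fun k l x y => ?_⟩
  have c : ∀ k, Continuous ((stFk SB k).extendOfNorm (stF SB)) := fun k => ContinuousLinearMap.continuous _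
  refine (stF_dense SB).induction_on₂ (p := fun x y => star ((stFk SB k).extendOfNorm (stF SB) x) *
    (stFk SB l).extendOfNorm (stF SB) y = if k = l then star x * y else 0) ?_ ?_ x y
  · refine isClosed_eq ?_ ?_
    · have := c k; have := c l; fun_prop
    · split_ifs <;> fun_prop
  · intro u v
    rw [LinearMap.extendOfNorm_eq (stF_dense SB) (hn k), LinearMap.extendOfNorm_eq (stF_dense SB) (hn l)]
    exact stFk_ip SB k l u v

lemma emb_isom (SB : Stabilization A W) (i j : ℕ) : Isometry (SB.emb i j) :=
  AddMonoidHomClass.isometry_of_norm _ (SB.norm_emb i j)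

lemma simple_W (SB : Stabilization A W) (hs : IsSimpleCStar A) {I : Set W} (hI : IsIdealIn W Set.univ I)
    (hc : IsClosed I) {x : W} (hx : x ∈ I) (hx0 : x ≠ 0) : I = Set.univ := by
  obtain ⟨-, h0, hadd, hneg, hmul⟩ := hI
  have hml : ∀ y ∈ I, ∀ b, b * y ∈ I := fun y hy b => (hmul y hy b trivial).2
  have hmr : ∀ y ∈ I, ∀ b, y * b ∈ I := fun y hy b => (hmul y hy b trivial).1
  -- if a corner contains something nonzero it is everything
  have corner : ∀ i l : ℕ, ∀ c : A, c ≠ 0 → SB.emb i l c ∈ I → ∀ d, SB.emb i l d ∈ I := by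
    intro i l c hc0 hcI
    let J : TwoSidedIdeal A := TwoSidedIdeal.mk' {d : A | SB.emb i l d ∈ I}
      (by simpa using h0)
      (fun {a b} ha hb => by
        simp only [Set.mem_ofPred_eq, map_add] at *; exact hadd _ ha _ hb)
      (fun {a} ha => by
        simp only [Set.mem_ofPred_eq, map_neg] at *; exact hneg _ ha)
      (fun {a b} hb => by
        have := hml _ hb (SB.emb i i a)
        rwa [SB.emb_mul, if_pos rfl] at this)
      (fun {a b} ha => by
        have := hmr _ ha (SB.emb l l b)
        rwa [SB.emb_mul, if_pos rfl] at this)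
    have hJ : (J : Set A) = {d : A | SB.emb i l d ∈ I} := TwoSidedIdeal.coe_mk' _ _ _ _ _ _
    have hJc : IsClosed (J : Set A) := by
      rw [hJ]; exact hc.preimage (emb_isom SB i l).continuous
    rcases hs.2 J hJc with h | h
    · exfalso
      have : c ∈ (J : Set A) := by rw [hJ]; exact hcI
      rw [h] at this; exact hc0 this
    · intro d
      have : d ∈ (J : Set A) := by rw [h]; trivial
      rw [hJ] at this; exact this
  -- find nonzero corner
  have dl : ∀ y : W, y ≠ 0 → ∃ i j a, SB.emb i j a * y ≠ 0 := by
    intro y hy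
    by_contra hcon
    push Not at hcon
    have : ∀ w : W, w * y = 0 := by
      refine fun w => (stF_dense SB).induction_on (p := fun w => w * y = 0) w
        (isClosed_eq (by fun_prop) (by fun_prop)) fun u => ?_
      induction u using Finsupp.induction_linear with
      | zero => simp
      | add u v hu hv => rw [map_add, add_mul, hu, hv, add_zero]
      | single p a => rw [stF_single]; exact hcon _ _ _
    exact hy ((CStarRing.star_mul_self_eq_zero_iff y).mp (this (star y)))
  obtain ⟨i, j, a, h1⟩ := dl x hx0
  obtain ⟨l, k, b, h2⟩ := dl (star (SB.emb i j a * x)) (star_ne_zero.mpr h1)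
  have h3 : SB.emb i j a * x * SB.emb k l (star b) ≠ 0 := by
    intro h; apply h2
    have := congrArg star h
    rw [star_mul, SB.emb_star, star_star, star_zero] at this
    exact this
  have hr : ∀ w : W, SB.emb i j a * w * SB.emb k l (star b) ∈ Set.range (SB.emb i l) := by
    refine fun w => (stF_dense SB).induction_on
      (p := fun w => SB.emb i j a * w * SB.emb k l (star b) ∈ Set.range (SB.emb i l)) w
      ((emb_isom SB i l).isClosedEmbedding.isClosed_range.preimage (by fun_prop)) fun u => ?_
    induction u using Finsupp.induction_linear with
    | zero => exact ⟨0, by simp⟩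
    | add u v hu hv =>
      obtain ⟨p, hp⟩ := hu
      obtain ⟨q, hq⟩ := hv
      exact ⟨p + q, by rw [map_add, map_add, mul_add, add_mul, hp, hq]⟩
    | single p c =>
      rw [stF_single, SB.emb_mul]
      split_ifs
      · rw [SB.emb_mul]
        split_ifs
        · exact ⟨_, rfl⟩
        · exact ⟨0, by simp⟩
      · exact ⟨0, by simp⟩
  obtain ⟨c, hc'⟩ := hr x
  have hcI : SB.emb i l c ∈ I := by rw [hc']; exact hmr _ (hml _ hx _) _
  have hc0 : c ≠ 0 := by rintro rfl; rw [map_zero] at hc'; exact h3 hc'.symm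
  have all : ∀ m n d, SB.emb m n d ∈ I := by
    intro m n
    refine corner m n (star c * c * star c) ?_ ?_
    · intro h
      have h4 : star (star c * c) * (star c * c) = 0 := by
        rw [star_mul, star_star, ← mul_assoc, h, zero_mul]
      exact hc0 ((CStarRing.star_mul_self_eq_zero_iff c).mp
        ((CStarRing.star_mul_self_eq_zero_iff _).mp h4))
    · have := hmr _ (hml _ hcI (SB.emb m i (star c))) (SB.emb l n (star c))
      rwa [SB.emb_mul, if_pos rfl, SB.emb_mul, if_pos rfl] at this
  refine Set.eq_univ_of_forall fun w => (stF_dense SB).induction_on (p := fun w => w ∈ I) w hc fun u => ?_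
  induction u using Finsupp.induction_linear with
  | zero => simpa using h0
  | add u v hu hv => rw [map_add]; exact hadd _ hu _ hv
  | single p a => rw [stF_single]; exact all _ _ _

end stab

/-! ### Pedersen ideal -/

lemma cfcn_mem_pedersen {a : W} (ha : 0 ≤ a) {F : ℝ → ℝ} (hF : Continuous F) {s : ℝ} (hs : 0 < s)
    (h : ∀ x, x ≤ s → F x = 0) : cfcₙ F a ∈ pedersen W := by
  unfold pedersen pedersenIn
  rw [Set.mem_iInter₂]
  rintro I ⟨⟨-, h0, hadd, hneg, hmul⟩, hd⟩
  set f := cfcₙ F a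
  set g := fEps s a
  have hfg : f * g = f := cfcn_mul' ha hF (h 0 hs.le) (cutoff_cont _) (cutoff_zero _) fun x hx => by
    rcases le_total x s with hh | hh
    · rw [h x hh, zero_mul]
    · rw [cutoff_eq_one hs hh, mul_one]
  obtain ⟨y, hy, hyn⟩ := Metric.mem_closure_iff.mp (hd (Set.mem_univ g)) 1 one_pos
  rw [dist_eq_norm] at hyn
  have hu : ‖((g - y : W) : Unitization ℂ W)‖ < 1 := by rwa [Unitization.norm_inr]
  obtain ⟨v, hv⟩ := isUnit_one_sub_of_norm_lt_one hu
  have e1 : ((f : W) : Unitization ℂ W) * (v : Unitization ℂ W) = ((f * y : W) : Unitization ℂ W) := by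
    rw [hv, mul_sub, mul_one, ← Unitization.inr_mul, ← Unitization.inr_sub, mul_sub, hfg]
    congr 1; abel
  have e2 : ((f : W) : Unitization ℂ W) = ((f * y : W) : Unitization ℂ W) * (↑v⁻¹ : Unitization ℂ W) := by
    rw [← e1, mul_assoc, Units.mul_inv, mul_one]
  have e3 : (↑v⁻¹ : Unitization ℂ W).fst = 1 := by
    have := congrArg (fun t : Unitization ℂ W => t.fst) (Units.mul_inv v)
    have e0 : (v : Unitization ℂ W).fst = 1 := by
      have h5 : (v : Unitization ℂ W) + ((g - y : W) : Unitization ℂ W) = 1 := by rw [hv]; abel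
      have := congrArg (fun t : Unitization ℂ W => t.fst) h5
      simpa only [Unitization.fst_add, Unitization.fst_inr, add_zero, Unitization.fst_one] using this
    simpa only [Unitization.fst_mul, e0, one_mul, Unitization.fst_one] using this
  have e4 : f = f * y + f * y * (↑v⁻¹ : Unitization ℂ W).snd := by
    have := congrArg (fun t : Unitization ℂ W => t.snd) e2
    rw [Unitization.snd_mul, e3] at this
    simpa using this
  rw [e4]
  have hfy : f * y ∈ I := (hmul y hy f trivial).2
  exact hadd _ hfy _ (hmul _ hfy _ trivial).1

lemma fEps_mem_pedersen {a : W} (ha : 0 ≤ a) {δ : ℝ} (hδ : 0 < δ) : fEps δ a ∈ pedersen W :=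
  cfcn_mem_pedersen ha (cutoff_cont _) (half_pos hδ) fun x h => cutoff_eq_zero hδ h

lemma D_cut_fin {a : W} (ha : 0 ≤ a) {δ : ℝ} (hδ : 0 < δ) (τ : QuasiTrace W) : dTau τ (cut δ a) < ∞ :=
  (D_cut_le_T τ ha (cutoff_cont δ) (cutoff_zero _) hδ.le (fun x _ => cutoff_nn _ _)
    (fun x h => (cutoff_eq_one hδ h).ge)).trans_lt
    (τ.finite_on_pedersen _ (fEps_mem_pedersen ha hδ) (fEps_nn _ ha))

lemma eval_continuous {p : W} (hp : p ∈ pedersen W) : Continuous fun τ : QuasiTrace W => τ.toFun p :=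
  (continuous_apply (A := fun _ : pedersen W => ℝ≥0∞) (⟨p, hp⟩ : pedersen W)).comp
    (continuous_induced_dom (f := fun (τ : QuasiTrace W) => fun a : pedersen W => τ.toFun a))

lemma T_smul (τ : QuasiTrace W) {r : ℝ} (hr : 0 < r) {a : W} (ha : 0 ≤ a) :
    τ.toFun (r • a) = ENNReal.ofReal r * τ.toFun a := τ.map_smul r a hr ha

lemma D_zero_of_T_zero (τ : QuasiTrace W) {a : W} (ha : 0 ≤ a) (h : τ.toFun a = 0) : dTau τ a = 0 := by
  unfold dTau
  rw [ENNReal.iSup_eq_zero]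
  intro n
  have hp : (0 : ℝ) < 1 / ((n : ℝ) + 1) := by positivity
  have h1 : τ.toFun (fEps (1 / ((n : ℝ) + 1)) a) ≤ τ.toFun (cfcₙ (fun x : ℝ => 2 / (1 / ((n : ℝ) + 1)) * x) a) :=
    T_cfcn_mono τ ha (cutoff_cont _) (cutoff_zero _) (by fun_prop) (by simp) (fun x _ => cutoff_nn _ _)
      (fun x hx => cutoff_le_lin hp hx)
  have h2 : cfcₙ (fun x : ℝ => 2 / (1 / ((n : ℝ) + 1)) * x) a = (2 / (1 / ((n : ℝ) + 1))) • a := by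
    have := cfcₙ_smul (2 / (1 / ((n : ℝ) + 1))) (fun x : ℝ => x) a (by fun_prop) rfl
    simp only [smul_eq_mul] at this
    rw [this, cfcn_id' ha fun _ _ => rfl]
  rw [h2, T_smul τ (by positivity) ha, h, mul_zero] at h1
  exact le_antisymm h1 zero_le

lemma T_zero_of_D_zero (τ : QuasiTrace W) {a : W} (ha : 0 ≤ a) (h : dTau τ a = 0) : τ.toFun a = 0 := by
  refine le_antisymm (T_lsc τ (fun n : ℕ => cut_nonneg (1 / ((n : ℝ) + 1)) ha) ha (cut_tendsto ha) fun n => ?_)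
    zero_le
  have hp : (0 : ℝ) < 1 / ((n : ℝ) + 1) := by positivity
  generalize (1 : ℝ) / ((n : ℝ) + 1) = s at hp
  have hM : 0 < ‖a‖ + 1 := by positivity
  have hle : cut s a ≤ (‖a‖ + 1) • fEps s a := by
    rw [fEps, ← cfcₙ_smul (‖a‖ + 1) (cutoff s) a (cutoff_cont s).continuousOn (cutoff_zero s)]
    refine cfcₙ_mono (fun x hx => ?_) (by fun_prop)
      (by have := cutoff_cont s; fun_prop) (by simp [hp.le]) (by simp [cutoff_zero])
    have hx0 := spec_nonneg ha hx
    rcases le_total x s with hh | hh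
    · rw [max_eq_right (by linarith)]; exact smul_nonneg hM.le (cutoff_nn _ _)
    · have := norm_apply_le_norm_cfcₙ (𝕜 := ℝ) (fun x => x) a hx (by fun_prop) rfl (IsSelfAdjoint.of_nonneg ha)
      rw [cfcn_id' ha (fun _ _ => rfl)] at this
      have h3 := le_abs_self x
      rw [Real.norm_eq_abs] at this
      rw [cutoff_eq_one hp hh, max_eq_left (by linarith)]
      simp only [smul_eq_mul, mul_one]; linarith
  refine (T_mono_comm τ (cut_nonneg s ha) hle ?_).trans ?_
  · rw [mul_smul_comm, smul_mul_assoc]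
    congr 1
    have z : max (0 - s) 0 = 0 := max_eq_right (by linarith)
    exact (cfcn_mul' (f := fun x => max (x - s) 0) (g := cutoff s)
      (h := fun x => max (x - s) 0 * cutoff s x) ha (by fun_prop) z (cutoff_cont _)
      (cutoff_zero _) fun _ _ => rfl).trans
      (cfcn_mul' (g := fun x => max (x - s) 0) (f := cutoff s) ha (cutoff_cont _) (cutoff_zero _)
        (by fun_prop) z fun x _ => mul_comm _ _).symm
  · rw [T_smul τ hM (fEps_nn _ ha)]
    have := T_fEps_le_D τ ha hp
    rw [h] at this
    rw [le_antisymm this zero_le, mul_zero]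

section stab

lemma fEps_zero (δ : ℝ) : fEps δ (0 : W) = 0 := cfcₙ_apply_zero
lemma cut_zero (δ : ℝ) : cut δ (0 : W) = 0 := cfcₙ_apply_zero
lemma D_zero (τ : QuasiTrace W) : dTau τ (0 : W) = 0 := by
  unfold dTau; simp [fEps_zero, τ.map_zero]

lemma ideal_closure {J : Set W} (hJ : IsIdealIn W Set.univ J) : IsIdealIn W Set.univ (closure J) := by
  obtain ⟨-, h0, hadd, hneg, hmul⟩ := hJ
  refine ⟨Set.subset_univ _, subset_closure h0, ?_, ?_, ?_⟩
  · exact fun x hx y hy => map_mem_closure₂ continuous_add hx hy (fun a ha b hb => hadd a ha b hb)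
  · exact fun x hx => map_mem_closure continuous_neg hx (fun a ha => hneg a ha)
  · intro x hx b _
    exact ⟨map_mem_closure (f := fun x => x * b) (by fun_prop) hx (fun a ha => (hmul a ha b trivial).1),
      map_mem_closure (f := fun x => b * x) (by fun_prop) hx (fun a ha => (hmul a ha b trivial).2)⟩

lemma faithful (SB : Stabilization A W) (hs : IsSimpleCStar A) (τ : QuasiTrace W) (hτ : ¬ τ.IsZero) {a : W}
    (ha : 0 ≤ a) (h : dTau τ a = 0) : a = 0 := by
  obtain ⟨L, hL⟩ := exists_copies SB
  by_contra ha0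
  let N : Set W := {x | dTau τ (star x * x) = 0}
  have hI : IsIdealIn W Set.univ N := by
    refine ⟨Set.subset_univ _, ?_, ?_, ?_, ?_⟩
    · change dTau τ (star 0 * 0) = 0
      rw [mul_zero, D_zero]
    · intro x hx y hy
      have := D_ideal_add hL τ x y
      rw [show dTau τ (star x * x) = 0 from hx, show dTau τ (star y * y) = 0 from hy, add_zero] at this
      exact le_antisymm this zero_le
    · intro x hx
      change dTau τ (star (-x) * (-x)) = 0
      rw [star_neg, neg_mul_neg]; exact hx
    · intro x hx b _
      exact ⟨le_antisymm ((D_ideal_right τ x b).trans (le_of_eq hx)) zero_le,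
        le_antisymm ((D_ideal_left τ x b).trans (le_of_eq hx)) zero_le⟩
  have hc : IsClosed N := by
    refine IsSeqClosed.isClosed fun x y hx hxy => ?_
    exact le_antisymm (D_lsc τ (fun n => star_mul_self_nonneg (x n)) (star_mul_self_nonneg y)
      (hxy.star.mul hxy) fun n => le_of_eq (hx n)) zero_le
  have hsq : sq a ∈ N := by
    change dTau τ (star (sq a) * sq a) = 0
    rw [sq_sa, sq_mul_sq ha, h]
  have hsq0 : sq a ≠ 0 := by
    intro h0; apply ha0; rw [← sq_mul_sq ha, h0, zero_mul]
  have hN := simple_W SB hs hI hc hsq hsq0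
  apply hτ
  intro b
  by_cases hb : 0 ≤ b
  · have : sq b ∈ N := by rw [hN]; trivial
    have h1 : dTau τ (star (sq b) * sq b) = 0 := this
    rw [sq_sa, sq_mul_sq hb] at h1
    exact T_zero_of_D_zero τ hb h1
  · exact τ.zero_of_not_nonneg b hb

/-- the corner embedding as a star homomorphism -/
def embHom (SB : Stabilization A W) : A →⋆ₙₐ[ℝ] W where
  toFun := SB.emb 0 0
  map_smul' r a := by
    have := (SB.emb 0 0).map_smul (r : ℂ) a
    simpa using this
  map_zero' := map_zero _
  map_add' := map_add _
  map_mul' a b := by rw [SB.emb_mul, if_pos rfl]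
  map_star' a := by rw [SB.emb_star]

lemma embHom_apply (SB : Stabilization A W) (a : A) : embHom SB a = SB.emb 0 0 a := rfl

lemma emb_fEps (SB : Stabilization A W) (δ : ℝ) {b : A} (hb : 0 ≤ b) :
    fEps δ (SB.emb 0 0 b) = SB.emb 0 0 (fEps δ b) := by
  have hc : Continuous (embHom SB) := (emb_isom SB 0 0).continuous
  have := NonUnitalStarAlgHom.map_cfcₙ (embHom SB) (cutoff δ) b (cutoff_cont δ).continuousOn (cutoff_zero δ)
    hc (IsSelfAdjoint.of_nonneg hb) ((IsSelfAdjoint.of_nonneg hb).map (embHom SB))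
  exact this.symm

lemma D_emb_le_one (SB : Stabilization A W) {b : A} (hb : 0 ≤ b) (τ : QuasiTrace W)
    (hτ : τ ∈ closure (QTSet SB)) (hb' : 0 ≤ SB.emb 0 0 b) : dTau τ (SB.emb 0 0 b) ≤ 1 := by
  refine iSup_le fun n => ?_
  have hp : (0 : ℝ) < 1 / ((n : ℝ) + 1) := by positivity
  have hcl : IsClosed {σ : QuasiTrace W | σ.toFun (fEps (1 / ((n : ℝ) + 1)) (SB.emb 0 0 b)) ≤ 1} :=
    isClosed_le (eval_continuous (fEps_mem_pedersen hb' hp)) continuous_const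
  refine closure_minimal ?_ hcl hτ
  intro σ hσ
  change σ.toFun _ ≤ 1
  rw [emb_fEps SB _ hb]
  have h1 : (⨆ a : {a : A // 0 ≤ a ∧ ‖a‖ ≤ 1}, σ.toFun (SB.emb 0 0 a)) = 1 := hσ
  rw [← h1]
  exact le_iSup (fun a : {a : A // 0 ≤ a ∧ ‖a‖ ≤ 1} => σ.toFun (SB.emb 0 0 a))
    ⟨fEps _ b, fEps_nn _ hb, fEps_norm _ hb⟩

lemma D_le_D_sq (τ : QuasiTrace W) {e : W} (he : 0 ≤ e) : dTau τ e ≤ dTau τ (star e * e) := by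
  rw [(IsSelfAdjoint.of_nonneg he).star_eq]
  refine iSup_le fun n => ?_
  have hp : (0 : ℝ) < 1 / ((n : ℝ) + 1) := by positivity
  generalize (1 : ℝ) / ((n : ℝ) + 1) = δ at hp
  have e1 : e * e = cfcₙ (fun x : ℝ => x * x) e := by
    have : e = cfcₙ (fun x : ℝ => x) e := (cfcn_id' he fun _ _ => rfl).symm
    nth_rewrite 1 2 [this]
    exact cfcn_mul' he (by fun_prop) rfl (by fun_prop) rfl fun _ _ => rfl
  have hd : 0 < δ / 2 * (δ / 2) := by positivity
  refine le_trans ?_ (T_fEps_le_D τ ((IsSelfAdjoint.of_nonneg he).mul_self_nonneg) hd)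
  unfold fEps
  rw [e1, cfcn_comp' (h := fun x => cutoff (δ / 2 * (δ / 2)) (x * x)) he (by fun_prop) (by simp)
    (cutoff_cont _) (cutoff_zero _) fun _ _ => rfl]
  refine T_cfcn_mono τ he (cutoff_cont _) (cutoff_zero _) ((cutoff_cont _).comp (by fun_prop))
    (by simp [cutoff_zero]) (fun x _ => cutoff_nn _ _) fun x hx => ?_
  rcases le_total x (δ / 2) with hh | hh
  · rw [cutoff_eq_zero hp hh]; exact cutoff_nn _ _
  · rw [cutoff_eq_one hd (by nlinarith)]; exact cutoff_le_one _ _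

lemma uniform_bound (SB : Stabilization A W) (hs : IsSimpleCStar A) {e : W} (he : 0 ≤ e)
    (hP : e ∈ pedersen W) : ∃ M : ℝ≥0∞, M ≠ ∞ ∧ ∀ τ ∈ closure (QTSet SB), dTau τ e ≤ M := by
  obtain ⟨L, hL⟩ := exists_copies SB
  let J : Set W := {x | ∃ M : ℝ≥0∞, M ≠ ∞ ∧ ∀ τ ∈ closure (QTSet SB), dTau τ (star x * x) ≤ M}
  have hI : IsIdealIn W Set.univ J := by
    refine ⟨Set.subset_univ _, ⟨0, by simp, fun τ _ => by rw [mul_zero, D_zero]⟩, ?_, ?_, ?_⟩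
    · rintro x ⟨M, hM, hx⟩ y ⟨M', hM', hy⟩
      exact ⟨M + M', ENNReal.add_ne_top.mpr ⟨hM, hM'⟩, fun τ hτ =>
        (D_ideal_add hL τ x y).trans (add_le_add (hx τ hτ) (hy τ hτ))⟩
    · rintro x ⟨M, hM, hx⟩
      exact ⟨M, hM, fun τ hτ => by rw [star_neg, neg_mul_neg]; exact hx τ hτ⟩
    · rintro x ⟨M, hM, hx⟩ b _
      exact ⟨⟨M, hM, fun τ hτ => (D_ideal_right τ x b).trans (hx τ hτ)⟩,
        ⟨M, hM, fun τ hτ => (D_ideal_left τ x b).trans (hx τ hτ)⟩⟩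
  obtain ⟨a, ha⟩ := hs.1
  have haJ : SB.emb 0 0 a ∈ J := by
    refine ⟨1, by simp, fun τ hτ => ?_⟩
    have e1 : star (SB.emb 0 0 a) * SB.emb 0 0 a = SB.emb 0 0 (star a * a) := by
      rw [SB.emb_star, SB.emb_mul, if_pos rfl]
    have := star_mul_self_nonneg (SB.emb 0 0 a)
    rw [e1] at this ⊢
    exact D_emb_le_one SB (star_mul_self_nonneg a) τ hτ this
  have ha0 : SB.emb 0 0 a ≠ 0 := by
    intro h; have := SB.norm_emb 0 0 a; rw [h, norm_zero] at this; exact ha (norm_eq_zero.mp this.symm)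
  have hu := simple_W SB hs (ideal_closure hI) isClosed_closure (subset_closure haJ) ha0
  have heJ : e ∈ J := by
    unfold pedersen pedersenIn at hP
    rw [Set.mem_iInter₂] at hP
    exact hP J ⟨hI, by rw [hu]⟩
  obtain ⟨M, hM, h⟩ := heJ
  exact ⟨M, hM, fun τ hτ => (D_le_D_sq τ he).trans (h τ hτ)⟩

lemma gamma_div (SB : Stabilization A W) (hs : IsSimpleCStar A) (hΓ : GammaSurjective W) {z : W}
    (hz : 0 ≤ z) (n : ℕ) : ∃ x : W, 0 ≤ x ∧ ∀ τ : QuasiTrace W, ((n : ℝ≥0∞) + 1) * dTau τ x = dTau τ z := by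
  set κ : ℝ≥0∞ := ((n : ℝ≥0∞) + 1)⁻¹ with hκ
  have hn0 : ((n : ℝ≥0∞) + 1) ≠ 0 := by simp
  have hnt : ((n : ℝ≥0∞) + 1) ≠ ∞ := by simp
  have hκt : κ ≠ ∞ := ENNReal.inv_ne_top.mpr hn0
  have hκ0 : κ ≠ 0 := ENNReal.inv_ne_zero.mpr hnt
  have hmem : MemLAffPlus W (fun τ => ⨆ m : ℕ, κ * τ.toFun (fEps (1 / ((m : ℝ) + 1)) z)) := by
    refine ⟨fun m τ => κ * τ.toFun (fEps (1 / ((m : ℝ) + 1)) z), fun m => ?_, fun m τ => ?_, fun τ => rfl⟩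
    · have hp : (0 : ℝ) < 1 / ((m : ℝ) + 1) := by positivity
      by_cases h0 : fEps (1 / ((m : ℝ) + 1)) z = 0
      · left; intro τ; simp only [h0, τ.map_zero, mul_zero]
      · right
        have hped := fEps_mem_pedersen hz hp
        have hnn := fEps_nn (1 / ((m : ℝ) + 1)) hz
        refine ⟨(ENNReal.continuous_const_mul hκt).comp (eval_continuous hped), ?_, ?_, ?_, ?_⟩
        · intro t _ _ τ σ ρ hc
          simp only [hc _ hnn]
          ring
        · exact fun τ => ENNReal.mul_lt_top hκt.lt_top (τ.finite_on_pedersen _ hped hnn)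
        · intro τ hτ
          refine pos_iff_ne_zero.mpr (mul_ne_zero hκ0 fun h1 => h0 ?_)
          exact faithful SB hs τ hτ hnn (D_zero_of_T_zero τ hnn h1)
        · intro τ hτ; simp only [hτ _, mul_zero]
    · exact mul_le_mul_right (D_seq_mono τ hz (Nat.le_succ m)) κ
  obtain ⟨x, hx, h⟩ := hΓ _ hmem
  refine ⟨x, hx, fun τ => ?_⟩
  rw [h τ, ← ENNReal.mul_iSup, ← mul_assoc, hκ, ENNReal.mul_inv_cancel hn0 hnt, one_mul]
  rfl

lemma lemA (SB : Stabilization A W) (hs : IsSimpleCStar A) (hΓ : GammaSurjective W)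
    (hsc : StrictComparison W) {S : Set (QuasiTrace W)} {M : ℝ≥0∞} (hM : M ≠ ∞) {c : W} (hc : 0 ≤ c)
    (hcM : ∀ τ ∈ S, dTau τ c ≤ M) {t : ℝ} (ht : 0 < t) {η : ℝ≥0∞} (hη : η ≠ 0) :
    ∃ p ∈ her c, 0 ≤ p ∧ ∃ r : ℝ, 0 < r ∧ ∀ τ ∈ S, dTau τ (cut t c) ≤ dTau τ p + (η + η) ∧
      dTau τ p ≤ dTau τ (cut r p) + η := by
  by_cases hct : cut t c = 0
  · refine ⟨0, her_zero c, le_rfl, 1, one_pos, fun τ _ => ⟨?_, ?_⟩⟩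
    · rw [hct, D_zero]; exact zero_le
    · rw [D_zero]; exact zero_le
  obtain ⟨L, hL⟩ := exists_copies SB
  obtain ⟨N, hN⟩ := ENNReal.exists_nat_mul_gt hη (ENNReal.mul_ne_top ENNReal.ofNat_ne_top hM : 2 * M ≠ ∞)
  set δ : ℝ := t / ((N : ℝ) + 1) with hδ
  have hδ0 : 0 < δ := by positivity
  have hδt : ((N : ℝ) + 1) * δ = t := by rw [hδ]; field_simp
  have hkd : ∀ k : ℕ, 0 < ((k : ℝ) + 1) * δ := fun k => by positivity
  let d : QuasiTrace W → ℕ → ℝ≥0∞ := fun τ k => dTau τ (cut (((k : ℝ) + 1) * δ) c)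
  have hdN : ∀ τ, d τ N = dTau τ (cut t c) := fun τ => by simp only [d, hδt]
  have hd0 : ∀ τ, d τ 0 = dTau τ (cut δ c) := fun τ => by simp [d]
  have hdanti : ∀ τ, Antitone (d τ) := fun τ j k hjk =>
    D_cut_anti τ (hkd j).le (by gcongr) hc
  have hdfin : ∀ τ k, d τ k < ∞ := fun τ k => D_cut_fin hc (hkd k) τ
  let z : W := ∑ k ∈ Finset.range N, cpy L k (cut (((k : ℝ) + 1) * δ) c)
  have hz : 0 ≤ z := Finset.sum_nonneg fun k _ => cpy_nn _ _ _
  have hzD : ∀ τ, dTau τ z = ∑ k ∈ Finset.range N, d τ k := fun τ => by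
    rw [D_sum_orth τ _ _ (fun k _ => cpy_nn _ _ _) (fun i _ j _ hij => cpy_orth hL hij _ _)]
    exact Finset.sum_congr rfl fun k _ => D_cpy hL τ k (cut_nonneg _ hc)
  have hcut : ∀ {s : ℝ} (hs : 0 ≤ s) (τ : QuasiTrace W) (n : ℕ) (f : ℕ → W) (hf : ∀ k, 0 ≤ f k),
      dTau τ (cut s (∑ k ∈ Finset.range n, cpy L k (f k))) = ∑ k ∈ Finset.range n, dTau τ (cut s (f k)) := by
    intro s hs τ n f hf
    have zz : max (0 - s) 0 = 0 := max_eq_right (by linarith)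
    have e : cut s (∑ k ∈ Finset.range n, cpy L k (f k)) = ∑ k ∈ Finset.range n, cut s (cpy L k (f k)) :=
      cfcn_sum_orth _ _ (fun k _ => cpy_nn _ _ _) (fun i _ j _ hij => cpy_orth hL hij _ _) _ (by fun_prop) zz
    rw [e, D_sum_orth τ _ _ (fun k _ => cut_nonneg _ (cpy_nn _ _ _)) (fun i _ j _ hij =>
      cfcn_orth (cpy_nn _ _ _) (cpy_nn _ _ _) (cpy_orth hL hij _ _) (by fun_prop) zz (by fun_prop) zz)]
    exact Finset.sum_congr rfl fun k _ => D_cut_cpy hL τ k (hf k) hs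
  have hzcut : ∀ τ, dTau τ (cut δ z) = ∑ k ∈ Finset.range N, d τ (k + 1) := fun τ => by
    rw [hcut hδ0.le τ N _ (fun k => cut_nonneg _ hc)]
    refine Finset.sum_congr rfl fun k _ => ?_
    rw [cut_cut hδ0.le (hkd k).le hc]
    simp only [d]
    congr 2
    push_cast; ring
  obtain ⟨x, hx, hxD⟩ := gamma_div SB hs hΓ hz N
  let X : W := ∑ k ∈ Finset.range (N + 2), cpy L k x
  have hX : 0 ≤ X := Finset.sum_nonneg fun k _ => cpy_nn _ _ _
  have hXD : ∀ τ, dTau τ X = ((N : ℝ≥0∞) + 2) * dTau τ x := fun τ => by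
    rw [D_sum_orth τ _ _ (fun k _ => cpy_nn _ _ _) (fun i _ j _ hij => cpy_orth hL hij _ _)]
    rw [Finset.sum_congr rfl fun k _ => D_cpy hL τ k hx]
    simp
  have hN1 : 1 ≤ N := by
    rcases Nat.eq_zero_or_pos N with h | h
    · rw [h] at hN; simp at hN
    · exact h
  have hd0pos : ∀ τ : QuasiTrace W, ¬ τ.IsZero → 0 < d τ 0 := fun τ hτ => by
    refine pos_iff_ne_zero.mpr fun h => hct ?_
    have h1 := faithful SB hs τ hτ (cut_nonneg _ hc) h
    have h2 : cut (t - δ) (cut δ c) = cut t c := by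
      rw [cut_cut _ hδ0.le hc]
      · congr 1; ring
      · rw [← hδt]; have : (0 : ℝ) ≤ N := by positivity
        nlinarith
    rw [← h2]
    simp only [Nat.cast_zero, zero_add, one_mul] at h1
    rw [h1, cut_zero]
  have hNt : ((N : ℝ≥0∞) + 1) ≠ ∞ := by simp
  have hN0 : ((N : ℝ≥0∞) + 1) ≠ 0 := by simp
  have hxfin : ∀ τ, dTau τ x ≠ ∞ := fun τ h => by
    have := hxD τ
    rw [h, hzD, ENNReal.mul_top hN0] at this
    exact (ENNReal.sum_lt_top.mpr fun k _ => hdfin τ k).ne this.symm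
  have hle0 : ∀ τ, ∑ k ∈ Finset.range N, d τ k ≤ N * d τ 0 := fun τ => by
    have := Finset.sum_le_card_nsmul (Finset.range N) (d τ) (d τ 0) fun k _ => hdanti τ (Nat.zero_le k)
    simpa using this
  have hxpos : ∀ τ : QuasiTrace W, ¬ τ.IsZero → dTau τ x ≠ 0 := fun τ hτ h => by
    have h1 := hxD τ
    rw [h, mul_zero, hzD] at h1
    have h2 := (Finset.sum_eq_zero_iff.mp h1.symm) 0 (Finset.mem_range.mpr hN1)
    exact (hd0pos τ hτ).ne' h2
  have c1 : CuntzLE z X := by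
    refine hsc z X hz hX fun τ hτ => ?_
    rw [hXD, ← hxD τ]
    have : ((N : ℝ≥0∞) + 2) * dTau τ x = ((N : ℝ≥0∞) + 1) * dTau τ x + dTau τ x := by
      ring
    rw [this]
    exact ENNReal.lt_add_right (ENNReal.mul_ne_top hNt (hxfin τ)) (hxpos τ hτ)
  have c2 : CuntzLE x c := by
    refine hsc x c hx hc fun τ hτ => ?_
    refine lt_of_lt_of_le ?_ (D_cut_le τ hδ0.le hc)
    rw [← hd0]
    have h1 : ((N : ℝ≥0∞) + 1) * dTau τ x < ((N : ℝ≥0∞) + 1) * d τ 0 := by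
      rw [hxD, hzD]
      refine (hle0 τ).trans_lt ?_
      rw [add_mul, one_mul]
      exact ENNReal.lt_add_right (ENNReal.mul_ne_top (by simp) (hdfin τ 0).ne) (hd0pos τ hτ).ne'
    exact lt_of_mul_lt_mul_left' h1
  obtain ⟨s, hs0, hsD⟩ := D_cut_of_cuntz hz hX c1 hδ0
  have hsD' : ∀ τ, ∑ k ∈ Finset.range N, d τ (k + 1) ≤ ((N : ℝ≥0∞) + 2) * dTau τ (cut s x) := fun τ => by
    rw [← hzcut]
    refine (hsD τ).trans (le_of_eq ?_)
    rw [hcut hs0.le τ (N + 2) _ (fun k => hx)]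
    simp
  have hsum : ∀ τ, ∑ k ∈ Finset.range N, d τ k ≤ d τ 0 + ∑ k ∈ Finset.range N, d τ (k + 1) := fun τ => by
    rw [add_comm, ← Finset.sum_range_succ', Finset.sum_range_succ]
    exact le_self_add
  have hN2 : ((N : ℝ≥0∞) + 2) ≠ ∞ := by simp
  have hN20 : ((N : ℝ≥0∞) + 2) ≠ 0 := by simp
  have hd0M : ∀ τ ∈ S, d τ 0 ≤ M := fun τ hτ => by
    rw [hd0]; exact (D_cut_le τ hδ0.le hc).trans (hcM τ hτ)
  have hxM : ∀ τ ∈ S, dTau τ x ≤ M := fun τ hτ =>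
    (D_of_cuntz τ hx hc c2).trans (hcM τ hτ)
  have k2 : ∀ τ ∈ S, dTau τ x ≤ dTau τ (cut s x) + η := fun τ hτ => by
    have : ((N : ℝ≥0∞) + 2) * dTau τ x ≤ ((N : ℝ≥0∞) + 2) * (dTau τ (cut s x) + η) := by
      calc ((N : ℝ≥0∞) + 2) * dTau τ x = ((N : ℝ≥0∞) + 1) * dTau τ x + dTau τ x := by ring
        _ ≤ (M + ((N : ℝ≥0∞) + 2) * dTau τ (cut s x)) + M := by
          rw [hxD, hzD]
          gcongr
          · exact (hsum τ).trans (add_le_add (hd0M τ hτ) (hsD' τ))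
          · exact hxM τ hτ
        _ = ((N : ℝ≥0∞) + 2) * dTau τ (cut s x) + 2 * M := by ring
        _ ≤ ((N : ℝ≥0∞) + 2) * dTau τ (cut s x) + ((N : ℝ≥0∞) + 2) * η := by
          refine add_le_add le_rfl (hN.le.trans ?_)
          rw [add_mul]
          exact le_self_add
        _ = _ := by ring
    exact (ENNReal.mul_le_mul_iff_right hN20 hN2).mp this
  have k1 : ∀ τ ∈ S, dTau τ (cut t c) ≤ dTau τ x + η := fun τ hτ => by
    have : ((N : ℝ≥0∞) + 1) * dTau τ (cut t c) ≤ ((N : ℝ≥0∞) + 1) * (dTau τ x + η) := by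
      rw [mul_add, hxD, hzD, ← hdN, add_mul, one_mul]
      gcongr
      · have := Finset.card_nsmul_le_sum (Finset.range N) (d τ) (d τ N)
          fun k hk => hdanti τ (Finset.mem_range.mp hk).le
        simpa using this
      · calc d τ N ≤ M := (hdanti τ (Nat.zero_le N)).trans (hd0M τ hτ)
          _ ≤ 2 * M := by rw [two_mul]; exact le_self_add
          _ ≤ N * η := hN.le
          _ ≤ _ := by gcongr; exact le_self_add
    exact (ENNReal.mul_le_mul_iff_right hN0 hNt).mp this
  obtain ⟨yy, hyy⟩ := c2
  obtain ⟨n, hn⟩ := (hyy.eventually (gt_mem_nhds (by positivity : (0 : ℝ) < s / 4))).exists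
  set y := yy n
  set r := s / 4 with hr
  have hr0 : 0 < r := by positivity
  set b := star y * c * y with hb
  have hb0 : 0 ≤ b := conj_nn hc y
  set q := sq c * y with hq
  have hqb : star q * q = b := by
    rw [hq, hb, star_mul, sq_sa]
    conv_rhs => rw [← sq_mul_sq hc]
    noncomm_ring
  have hqh : q * star q ∈ her c := by
    have hsqc : sq c ∈ her c := her_cfcn hc _ (by fun_prop) (by simp)
    have := her_mul3 hsqc hsqc (y * star y)
    convert this using 1
    rw [hq, star_mul, sq_sa]; noncomm_ring
  have hq0 : 0 ≤ q * star q := mul_star_self_nonneg q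
  have f1 : ∀ τ, dTau τ (cut r (q * star q)) = dTau τ (cut r b) := fun τ => by
    rw [← D_cut_star τ hr0.le, hqb]
  have f2 : ∀ τ, dTau τ (cut r (cut r (q * star q))) = dTau τ (cut (r + r) b) := fun τ => by
    rw [cut_cut hr0.le hr0.le hq0, ← D_cut_star τ (by positivity), hqb]
  have g1 : ∀ τ, dTau τ (cut r b) ≤ dTau τ x := fun τ => D_cut_of_near τ hb0 hx (by rw [norm_sub_rev]; exact hn)
  have g2 : ∀ τ, dTau τ (cut s x) ≤ dTau τ (cut (r + r) b) := fun τ =>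
    D_cut_of_near' τ hx hb0 (by positivity) (by linarith)
  refine ⟨cut r (q * star q), ?_, cut_nonneg _ hq0, r, hr0, fun τ hτ => ⟨?_, ?_⟩⟩
  · exact her_trans hqh (her_cfcn hq0 _ (by fun_prop) (by simpa using hr0.le))
  · refine (k1 τ hτ).trans ?_
    rw [← add_assoc]
    gcongr
    refine (k2 τ hτ).trans ?_
    gcongr
    refine (g2 τ).trans ?_
    rw [f1]
    exact D_cut_anti τ hr0.le (by linarith) hb0
  · rw [f1, f2]
    refine (g1 τ).trans ((k2 τ hτ).trans ?_)
    gcongr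
    exact g2 τ

end stab

lemma step_lem (SB : Stabilization A W) (hs : IsSimpleCStar A) (hΓ : GammaSurjective W)
    (hsc : StrictComparison W) {S : Set (QuasiTrace W)} {M : ℝ≥0∞} (hM : M ≠ ∞) {c : W} (hc : 0 ≤ c)
    (hcM : ∀ τ ∈ S, dTau τ c ≤ M) {s : ℝ} (hs0 : 0 < s) {η : ℝ≥0∞} (hη : η ≠ 0) :
    ∃ (c' P : W) (r : ℝ), c' ∈ her c ∧ 0 ≤ c' ∧ (∀ τ ∈ S, dTau τ c' ≤ M) ∧ P ∈ her c ∧ 0 ≤ P ∧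
      P * c' = 0 ∧ 0 < r ∧ (∀ τ ∈ S, dTau τ (cut s c) ≤ dTau τ P + (η + η + η)) ∧
      (∀ τ ∈ S, dTau τ P ≤ dTau τ (cut r P) + η) ∧
      ∀ t : ℝ, 0 < t → ∃ s' : ℝ, 0 < s' ∧ ∀ τ ∈ S,
        dTau τ (cut t c) ≤ (dTau τ P + η) + dTau τ (cut s' c') := by
  obtain ⟨L, hL⟩ := exists_copies SB
  obtain ⟨p, hpc, hp, r2, hr2, hpr⟩ := lemA SB hs hΓ hsc hM hc hcM hs0 hη
  set r := r2 / 2 with hr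
  have hr0 : 0 < r := by positivity
  have hrr : r + r = r2 := by rw [hr]; ring
  set P := cut r p with hP
  have hP0 : 0 ≤ P := cut_nonneg r hp
  set f := fEps r p with hf
  have hfs : star f = f := cfcn_sa _ _
  have hf0 : 0 ≤ f := fEps_nn r hp
  have hcc := cutoff_cont r
  have hcz := cutoff_zero r
  have hff : f * f ≤ f := by
    rw [hf]; unfold fEps
    rw [cfcn_mul' hp hcc hcz hcc hcz (h := fun x => cutoff r x * cutoff r x) (fun x _ => rfl)]
    refine cfcn_le hp (hcc.mul hcc) (by simp [hcz]) hcc hcz fun x _ => ?_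
    exact mul_le_of_le_one_left (cutoff_nn _ _) (cutoff_le_one _ _)
  have hfp : f * f ≤ (2 / r) • p := by
    refine hff.trans ?_
    have e1 : (2 / r) • p = cfcₙ (fun x => (2 / r) * x) p := by
      rw [cfcₙ_const_mul_id (2 / r) p (IsSelfAdjoint.of_nonneg hp)]
    rw [e1]
    exact cfcn_le hp hcc hcz (by fun_prop) (by simp) fun x hx => cutoff_le_lin hr0 hx
  have hPf : P * f = P := by
    rw [hP, hf]; unfold cut fEps
    refine cfcn_mul' hp (by fun_prop) (by simp [hr0.le]) hcc hcz fun x hx => ?_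
    rcases le_total r x with h | h
    · rw [cutoff_eq_one hr0 h, mul_one]
    · rw [max_eq_right (by linarith), zero_mul]
  set h := sq c with hh
  have hhs : star h = h := sq_sa c
  have hhh : h * h = c := sq_mul_sq hc
  have hhc : h ∈ her c := her_cfcn hc _ (by fun_prop) (by simp)
  have hfc : f ∈ her c := her_trans hpc (her_cfcn hp _ hcc hcz)
  have hPc : P ∈ her c := her_trans hpc (her_cfcn hp _ (by fun_prop) (by simp [hr0.le]))
  set x := h - h * f with hx
  set y := h * f with hy
  have hxs : star x = h - f * h := by rw [hx, star_sub, star_mul, hfs, hhs]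
  have hys : star y = f * h := by rw [hy, star_mul, hfs, hhs]
  have hxy : star (x + y) * (x + y) = c := by rw [hx, hy, sub_add_cancel, hhs, hhh]
  have hfin : ∀ τ, dTau τ (star y * y) ≤ dTau τ p := fun τ => by
    refine (D_ideal_left τ f h).trans ?_
    have : 0 ≤ star f * f := star_mul_self_nonneg f
    rw [hfs] at this ⊢
    exact D_of_le τ this hp (by positivity) hfp
  have hpP : ∀ τ ∈ S, dTau τ p ≤ dTau τ P + η := fun τ hτ =>
    (hpr τ hτ).2.trans (add_le_add (D_cut_anti τ hr0.le (by rw [← hrr]; linarith) hp) le_rfl)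
  refine ⟨star x * x, P, r, ?_, star_mul_self_nonneg x, ?_, hPc, hP0, ?_, hr0, ?_, ?_, ?_⟩
  · rw [hxs]
    exact her_mul (her_sub hhc (her_mul hfc hhc)) (her_sub hhc (her_mul hhc hfc))
  · intro τ hτ
    rw [D_star]
    refine (D_of_le' τ (mul_star_self_nonneg x) hc ?_).trans (hcM τ hτ)
    have e1 : c - x * star x = star h * f * h + star h * (f - f * f) * h := by
      rw [hxs, hx, hy, ← hhh, hhs]; noncomm_ring
    rw [← sub_nonneg, e1]
    exact add_nonneg (conj_nn hf0 h) (conj_nn (sub_nonneg.mpr hff) h)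
  · rw [hxs, ← mul_assoc]
    have : P * (h - f * h) = 0 := by
      rw [mul_sub, ← mul_assoc, hPf, sub_self]
    rw [this, zero_mul]
  · intro τ hτ
    refine (hpr τ hτ).1.trans ((add_le_add (hpP τ hτ) le_rfl).trans (le_of_eq (by ring)))
  · intro τ hτ
    rw [hP, cut_cut hr0.le hr0.le hp, hrr]
    exact (D_cut_le τ hr0.le hp).trans (hpr τ hτ).2
  · intro t ht
    have hle : c ≤ (2 : ℝ) • (star x * x + star y * y) := by
      have := add_sq_le x y
      rwa [hxy] at this
    have hx0 := star_mul_self_nonneg x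
    have hy0 := star_mul_self_nonneg y
    obtain ⟨s1, hs1, h1⟩ := D_cut_of_cuntz hc (add_nonneg hx0 hy0)
      (cuntz_of_le hc (add_nonneg hx0 hy0) (by norm_num) hle) ht
    obtain ⟨s2, hs2, h2⟩ := D_cut_add hL hx0 hy0 hs1
    refine ⟨s2, hs2, fun τ hτ => (h1 τ).trans ((h2 τ).trans ?_)⟩
    rw [add_comm]
    exact add_le_add (((D_cut_le τ hs2.le hy0).trans (hfin τ)).trans (hpP τ hτ)) le_rfl

lemma construct (SB : Stabilization A W) (hs : IsSimpleCStar A) (hΓ : GammaSurjective W)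
    (hsc : StrictComparison W) {S : Set (QuasiTrace W)} {M : ℝ≥0∞} (hM : M ≠ ∞) {e : W} (he : 0 ≤ e)
    (heM : ∀ τ ∈ S, dTau τ e ≤ M) (η : ℕ → ℝ≥0∞) (hη : ∀ n, η n ≠ 0) :
    ∃ (P : ℕ → W) (r : ℕ → ℝ), (∀ k, P k ∈ her e) ∧ (∀ k, 0 ≤ P k) ∧
      (∀ i j, i ≠ j → P i * P j = 0) ∧ (∀ k, 0 < r k) ∧
      (∀ τ ∈ S, ∀ k, dTau τ (P k) ≤ dTau τ (cut (r k) (P k)) + η k) ∧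
      ∀ τ ∈ S, ∀ n : ℕ, dTau τ (cut (1 / ((n : ℝ) + 1)) e) ≤
        ∑ k ∈ Finset.range n, (dTau τ (P k) + η k) + (dTau τ (P n) + (η n + η n + η n)) := by
  let X := {x : W × (QuasiTrace W → ℝ≥0∞) // 0 ≤ x.1 ∧ x.1 ∈ her e ∧ (∀ τ ∈ S, dTau τ x.1 ≤ M) ∧
    ∀ t : ℝ, 0 < t → ∃ s : ℝ, 0 < s ∧ ∀ τ ∈ S, dTau τ (cut t e) ≤ x.2 τ + dTau τ (cut s x.1)}
  have hstep : ∀ (n : ℕ) (x : X), ∃ y : X × W × ℝ,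
      y.1.1.1 ∈ her x.1.1 ∧ y.2.1 ∈ her x.1.1 ∧ 0 ≤ y.2.1 ∧ y.2.1 * y.1.1.1 = 0 ∧ 0 < y.2.2 ∧
      (∀ τ, y.1.1.2 τ = x.1.2 τ + (dTau τ y.2.1 + η n)) ∧
      (∀ τ ∈ S, dTau τ y.2.1 ≤ dTau τ (cut y.2.2 y.2.1) + η n) ∧
      (∀ τ ∈ S, dTau τ (cut (1 / ((n : ℝ) + 1)) e) ≤
        x.1.2 τ + (dTau τ y.2.1 + (η n + η n + η n))) := by
    rintro n ⟨⟨c, acc⟩, hc, hce, hcM, hinv⟩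
    obtain ⟨s, hs0, hsD⟩ := hinv (1 / ((n : ℝ) + 1)) (by positivity)
    obtain ⟨c', P, r, h1, h2, h3, h4, h5, h6, h7, h8, h9, h10⟩ :=
      step_lem SB hs hΓ hsc hM hc hcM hs0 (hη n)
    refine ⟨⟨⟨⟨c', fun τ => acc τ + (dTau τ P + η n)⟩, h2, her_trans hce h1, h3, fun t ht => ?_⟩, P, r⟩,
      h1, h4, h5, h6, h7, fun τ => rfl, h9, fun τ hτ => ?_⟩
    · obtain ⟨t', ht', hD⟩ := hinv t ht
      obtain ⟨s', hs', hD'⟩ := h10 t' ht'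
      refine ⟨s', hs', fun τ hτ => (hD τ hτ).trans ?_⟩
      change _ ≤ acc τ + (dTau τ P + η n) + _
      rw [add_assoc]
      exact add_le_add le_rfl (hD' τ hτ)
    · exact (hsD τ hτ).trans (add_le_add le_rfl (h8 τ hτ))
  choose F hF using hstep
  let x0 : X := ⟨⟨e, fun _ => 0⟩, he, her_self he, heM, fun t ht => ⟨t, ht, fun τ _ => by simp⟩⟩
  let x : ℕ → X := fun n => Nat.rec x0 (fun n x => (F n x).1) n
  have hxs : ∀ n, x (n + 1) = (F n (x n)).1 := fun n => rfl
  let P : ℕ → W := fun n => (F n (x n)).2.1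
  have hanti : Antitone fun n => her (x n).1.1 := by
    refine antitone_nat_of_succ_le fun n => ?_
    rw [hxs]
    exact her_trans (hF n (x n)).1
  have horth : ∀ i j, i < j → P i * P j = 0 := fun i j hij => by
    have h1 : P i * (x (i + 1)).1.1 = 0 := (hF i (x i)).2.2.2.1
    exact her_orth h1 (hanti (Nat.succ_le_of_lt hij) (hF j (x j)).2.1)
  have hP0 : ∀ k, 0 ≤ P k := fun k => (hF k (x k)).2.2.1
  have hacc : ∀ τ n, (x n).1.2 τ = ∑ k ∈ Finset.range n, (dTau τ (P k) + η k) := by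
    intro τ n
    induction n with
    | zero => rfl
    | succ n ih =>
      rw [Finset.sum_range_succ, ← ih, hxs]
      exact (hF n (x n)).2.2.2.2.2.1 τ
  refine ⟨P, fun n => (F n (x n)).2.2, fun k => her_trans (x k).2.2.1 (hF k (x k)).2.1, hP0, ?_,
    fun k => (hF k (x k)).2.2.2.2.1, fun τ hτ k => (hF k (x k)).2.2.2.2.2.2.1 τ hτ, fun τ hτ n => ?_⟩
  · intro i j hij
    rcases lt_or_gt_of_ne hij with h | h
    · exact horth i j h
    · have := congrArg star (horth j i h)
      rwa [star_mul, star_zero, (IsSelfAdjoint.of_nonneg (hP0 i)).star_eq,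
        (IsSelfAdjoint.of_nonneg (hP0 j)).star_eq] at this
  · rw [← hacc]
    exact (hF n (x n)).2.2.2.2.2.2.2 τ hτ

lemma spec_le {a : W} (ha : 0 ≤ a) {x : ℝ} (hx : x ∈ quasispectrum ℝ a) : x ≤ ‖a‖ :=
  (le_abs_self x).trans (NonUnitalIsometricContinuousFunctionalCalculus.norm_quasispectrum_le a hx
    (IsSelfAdjoint.of_nonneg ha))

lemma tsum_nn {v : ℕ → W} (hv : Summable v) (h : ∀ k, 0 ≤ v k) : 0 ≤ ∑' k, v k :=
  CStarAlgebra.isClosed_nonneg.mem_of_tendsto hv.hasSum.tendsto_sum_nat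
    (Eventually.of_forall fun n => Finset.sum_nonneg fun k _ => h k)

lemma her_tsum {v : ℕ → W} {e : W} (hv : Summable v) (h : ∀ k, v k ∈ her e) : ∑' k, v k ∈ her e :=
  (her_closed e).mem_of_tendsto hv.hasSum.tendsto_sum_nat
    (Eventually.of_forall fun n => her_sum _ _ fun k _ => h k)

lemma lam_hasSum (n : ℕ) : HasSum (fun k : ℕ => ((1 : ℝ) / 4) ^ (k + n + 1)) ((1 / 4) ^ n / 3) := by
  have := (hasSum_geometric_of_lt_one (by norm_num : (0 : ℝ) ≤ 1 / 4) (by norm_num)).mul_left (((1 : ℝ) / 4) ^ (n + 1))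
  have e1 : (fun k : ℕ => ((1 : ℝ) / 4) ^ (k + n + 1)) = fun i => (1 / 4) ^ (n + 1) * (1 / 4) ^ i := by
    funext k; rw [← pow_add]; congr 1; ring
  have e2 : ((1 : ℝ) / 4) ^ n / 3 = (1 / 4) ^ (n + 1) * (1 - 1 / 4)⁻¹ := by
    rw [pow_succ]
    have : (1 - 1 / 4 : ℝ)⁻¹ = 4 / 3 := by norm_num
    rw [this]; ring
  rw [e1, e2]; exact this

/-- the function used to flatten `P k`. -/
def flat (l r : ℝ) : ℝ → ℝ := fun x => l * min 1 (max 0 (x / r))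

lemma flat_cont (l r : ℝ) : Continuous (flat l r) := by unfold flat; fun_prop
lemma flat_zero (l r : ℝ) : flat l r 0 = 0 := by simp [flat]
lemma flat_nn {l : ℝ} (hl : 0 ≤ l) (r x : ℝ) : 0 ≤ flat l r x := by
  unfold flat; exact mul_nonneg hl (le_min zero_le_one (le_max_left _ _))
lemma flat_le {l : ℝ} (hl : 0 ≤ l) (r x : ℝ) : flat l r x ≤ l := by
  unfold flat; exact mul_le_of_le_one_right hl (min_le_left _ _)
lemma flat_eq {l r x : ℝ} (hr : 0 < r) (h : r ≤ x) : flat l r x = l := by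
  unfold flat
  rw [min_eq_left, mul_one]
  exact le_max_of_le_right ((one_le_div hr).mpr h)
lemma flat_lin {l r x : ℝ} (hl : 0 ≤ l) (hr : 0 < r) (h : 0 ≤ x) : flat l r x ≤ l / r * x := by
  unfold flat
  rw [max_eq_right (by positivity), div_mul_eq_mul_div, mul_div_assoc]
  exact mul_le_mul_of_nonneg_left (min_le_right _ _) hl
lemma flat_bd {l r x N : ℝ} (hl : 0 < l) (hr : 0 < r) (h : 0 ≤ x) (hx : x ≤ N) :
    x ≤ (N + r) / l * flat l r x := by
  rcases le_total r x with h1 | h1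
  · rw [flat_eq hr h1, div_mul_cancel₀ _ hl.ne']; linarith
  · unfold flat
    rw [max_eq_right (by positivity), min_eq_right ((div_le_one hr).mpr h1)]
    have : (N + r) / l * (l * (x / r)) = N * (x / r) + x := by field_simp
    rw [this]
    have : 0 ≤ N * (x / r) := mul_nonneg (h.trans hx) (by positivity)
    linarith

lemma smul_eq_cfcn {a : W} (ha : 0 ≤ a) (C : ℝ) : C • a = cfcₙ (fun x => C * x) a := by
  rw [cfcₙ_const_mul_id C a (IsSelfAdjoint.of_nonneg ha)]

lemma D_flat {P : W} (hP : 0 ≤ P) {l r : ℝ} (hl : 0 < l) (hr : 0 < r) (τ : QuasiTrace W) :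
    dTau τ P ≤ dTau τ (cfcₙ (flat l r) P) := by
  refine D_of_le τ hP (cfcn_nn hP fun x _ => flat_nn hl.le r x) (C := (‖P‖ + r) / l) (by positivity) ?_
  have e1 : (((‖P‖ + r) / l) • cfcₙ (flat l r) P) = cfcₙ (fun x => (‖P‖ + r) / l * flat l r x) P := by
    rw [cfcₙ_const_mul _ _ _ (flat_cont l r).continuousOn (flat_zero l r)]
  rw [e1]
  conv_lhs => rw [← cfcn_id' hP (f := fun x => x) (fun x _ => rfl)]
  refine cfcₙ_mono (fun x hx => flat_bd hl hr (spec_nonneg hP hx) (spec_le hP hx))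
    (by fun_prop) (continuous_const.mul (flat_cont l r)).continuousOn rfl (by simp [flat_zero])

lemma D_cut_flat {P : W} (hP : 0 ≤ P) {l r m : ℝ} (hl : 0 < l) (hr : 0 < r) (hm : 0 < m) (τ : QuasiTrace W) :
    dTau τ (cfcₙ (cutoff m) (cfcₙ (flat l r) P)) ≤ dTau τ P := by
  have hv : 0 ≤ cfcₙ (flat l r) P := cfcn_nn hP fun x _ => flat_nn hl.le r x
  refine (D_of_le τ (fEps_nn m hv) hv (C := 2 / m) (by positivity) ?_).trans
    (D_of_le τ hv hP (C := l / r) (by positivity) ?_)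
  · rw [smul_eq_cfcn hv]
    exact cfcn_le hv (cutoff_cont m) (cutoff_zero m) (by fun_prop) (by simp) fun x hx => cutoff_le_lin hm hx
  · rw [smul_eq_cfcn hP]
    exact cfcn_le hP (flat_cont _ _) (flat_zero _ _) (by fun_prop) (by simp) fun x hx => flat_lin hl.le hr hx

lemma T_cut_flat {P : W} (hP : 0 ≤ P) {l r m : ℝ} (hl : 0 < l) (hr : 0 < r) (hm : 0 < m) (hml : m ≤ l)
    (τ : QuasiTrace W) :
    dTau τ (cut r P) ≤ τ.toFun (cfcₙ (cutoff 1) (cfcₙ (cutoff m) (cfcₙ (flat l r) P))) := by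
  have hv : 0 ≤ cfcₙ (flat l r) P := cfcn_nn hP fun x _ => flat_nn hl.le r x
  rw [cfcn_comp' hv (cutoff_cont m) (cutoff_zero m) (cutoff_cont 1) (cutoff_zero 1)
    (h := fun x => cutoff 1 (cutoff m x)) (fun x _ => rfl)]
  have hc : Continuous fun x => cutoff 1 (cutoff m x) := (cutoff_cont 1).comp (cutoff_cont m)
  have hz : cutoff 1 (cutoff m 0) = 0 := by rw [cutoff_zero, cutoff_zero]
  rw [cfcn_comp' hP (flat_cont l r) (flat_zero l r) hc hz
    (h := fun x => cutoff 1 (cutoff m (flat l r x))) (fun x _ => rfl)]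
  refine D_cut_le_T τ hP (hc.comp (flat_cont l r)) (by simp only [Function.comp_apply, flat_zero]; exact hz) hr.le
    (fun x _ => cutoff_nn _ _) fun x hx => ?_
  simp only [Function.comp_apply]
  rw [flat_eq hr hx, cutoff_eq_one hm hml, cutoff_eq_one one_pos le_rfl]

lemma assemble {S : Set (QuasiTrace W)} {e : W} (P : ℕ → W) (r : ℕ → ℝ) (η : ℕ → ℝ≥0∞)
    (hPe : ∀ k, P k ∈ her e) (hP : ∀ k, 0 ≤ P k)
    (ho : ∀ i j, i ≠ j → P i * P j = 0) (hr : ∀ k, 0 < r k)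
    (hη : ∀ τ ∈ S, ∀ k, dTau τ (P k) ≤ dTau τ (cut (r k) (P k)) + η k) :
    ∃ e₀ : W, e₀ ∈ her e ∧ 0 ≤ e₀ ∧ ‖e₀‖ ≤ 1 ∧
      (∀ τ : QuasiTrace W, ∀ n, ∑ k ∈ Finset.range (n + 1), dTau τ (P k) ≤ dTau τ e₀) ∧
      ∃ es : ℕ → W,
        (∀ n, es n ∈ her e₀ ∧ 0 ≤ es n ∧ ‖es n‖ ≤ 1) ∧
        (∀ n, es n ≤ es (n + 1)) ∧
        (∀ τ ∈ S, (⨆ n : ℕ, τ.toFun (es n)) = dTau τ e₀) ∧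
        ∀ n, omegaOn S (es n) ≤ ∑' k, η k := by
  set l : ℕ → ℝ := fun k => (1 / 4) ^ (k + 1) with hl
  have hl0 : ∀ k, 0 < l k := fun k => by simp only [hl]; positivity
  have hlanti : ∀ i j, i ≤ j → l j ≤ l i := fun i j hij =>
    pow_le_pow_of_le_one (by norm_num) (by norm_num) (by omega)
  let v : ℕ → W := fun k => cfcₙ (flat (l k) (r k)) (P k)
  have hv0 : ∀ k, 0 ≤ v k := fun k => cfcn_nn (hP k) fun x _ => flat_nn (hl0 k).le _ _
  have hvn : ∀ k, ‖v k‖ ≤ l k := fun k => cfcn_norm_le (hP k) fun x _ => by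
    rw [abs_of_nonneg (flat_nn (hl0 k).le _ _)]; exact flat_le (hl0 k).le _ _
  have hvo : ∀ i j, i ≠ j → v i * v j = 0 := fun i j hij =>
    cfcn_orth (hP i) (hP j) (ho i j hij) (flat_cont _ _) (flat_zero _ _) (flat_cont _ _) (flat_zero _ _)
  have hve : ∀ k, v k ∈ her e := fun k =>
    her_trans (hPe k) (her_cfcn (hP k) _ (flat_cont _ _) (flat_zero _ _))
  have hlsum : HasSum l (1 / 3) := by
    have := lam_hasSum 0
    rwa [pow_zero] at this
  have hsum : Summable v := Summable.of_norm_bounded hlsum.summable hvn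
  set e₀ := ∑' k, v k with he₀
  have he₀0 : 0 ≤ e₀ := tsum_nn hsum hv0
  have hsum' : ∀ n, Summable fun k => v (k + (n + 1)) := fun n => (summable_nat_add_iff (n + 1)).mpr hsum
  let s : ℕ → W := fun n => ∑ k ∈ Finset.range (n + 1), v k
  let t : ℕ → W := fun n => ∑' k, v (k + (n + 1))
  have hst : ∀ n, e₀ = s n + t n := fun n => (hsum.sum_add_tsum_nat_add (n + 1)).symm
  have hs0 : ∀ n, 0 ≤ s n := fun n => Finset.sum_nonneg fun k _ => hv0 k
  have ht0 : ∀ n, 0 ≤ t n := fun n => tsum_nn (hsum' n) fun k => hv0 _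
  have hsto : ∀ n, s n * t n = 0 := fun n => by
    simp only [s, t]
    rw [← (hsum' n).tsum_mul_left]
    convert tsum_zero with k
    rw [Finset.sum_mul]
    refine Finset.sum_eq_zero fun i hi => hvo _ _ ?_
    have := Finset.mem_range.mp hi
    omega
  have htn : ∀ n, ‖t n‖ ≤ l n / 2 := fun n => by
    have h1 : ‖t n‖ ≤ (1 / 4) ^ (n + 1) / 3 :=
      tsum_of_norm_bounded (lam_hasSum (n + 1)) fun k => hvn (k + (n + 1))
    refine h1.trans ?_
    have := hl0 n
    simp only [hl] at this ⊢
    linarith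
  have hfs : ∀ n, fEps (l n) e₀ = ∑ k ∈ Finset.range (n + 1), cfcₙ (cutoff (l n)) (v k) := fun n => by
    unfold fEps
    rw [hst n, cfcn_add_orth (IsSelfAdjoint.of_nonneg (hs0 n)) (IsSelfAdjoint.of_nonneg (ht0 n)) (hsto n)
      _ (cutoff_cont _) (cutoff_zero _)]
    have : cfcₙ (cutoff (l n)) (t n) = 0 := by
      rw [← cfcₙ_const_zero ℝ (t n)]
      exact cfcₙ_congr fun x hx => cutoff_eq_zero (hl0 n) ((spec_le (ht0 n) hx).trans (htn n))
    rw [this, add_zero]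
    exact cfcn_sum_orth _ _ (fun k _ => hv0 k) (fun i _ j _ hij => hvo i j hij) _ (cutoff_cont _) (cutoff_zero _)
  refine ⟨e₀, her_tsum hsum hve, he₀0, ?_, ?_, fun n => fEps (l n) e₀, fun n => ⟨?_, fEps_nn _ he₀0, fEps_norm _ he₀0⟩,
    ?_, ?_, ?_⟩
  · exact (tsum_of_norm_bounded hlsum hvn).trans (by norm_num)
  · intro τ n
    have h1 : dTau τ (s n) ≤ dTau τ e₀ := D_of_le' τ (hs0 n) he₀0 (by
      rw [hst n]; exact le_add_of_nonneg_right (ht0 n))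
    refine le_trans ?_ h1
    simp only [s]
    rw [D_sum_orth τ _ _ (fun k _ => hv0 k) (fun i _ j _ hij => hvo i j hij)]
    exact Finset.sum_le_sum fun k _ => D_flat (hP k) (hl0 k) (hr k) τ
  · exact her_cfcn he₀0 _ (cutoff_cont _) (cutoff_zero _)
  · intro n
    exact cfcn_le he₀0 (cutoff_cont _) (cutoff_zero _) (cutoff_cont _) (cutoff_zero _) fun x hx =>
      cutoff_anti (hl0 _) (hlanti _ _ (Nat.le_succ n)) hx
  · intro τ _
    refine le_antisymm (iSup_le fun n => T_fEps_le_D τ he₀0 (hl0 n)) (iSup_le fun m => ?_)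
    obtain ⟨n, hn⟩ := exists_pow_lt_of_lt_one (show (0 : ℝ) < 1 / ((m : ℝ) + 1) by positivity)
      (show (1 / 4 : ℝ) < 1 by norm_num)
    refine le_trans ?_ (le_iSup _ n)
    refine T_fEps_mono τ he₀0 (hl0 n) (le_trans ?_ hn.le)
    exact pow_le_pow_of_le_one (by norm_num) (by norm_num) (Nat.le_succ n)
  · intro n
    unfold omegaOn
    refine (iInf_le _ 0).trans (iSup₂_le fun τ hτ => ?_)
    rw [tsub_le_iff_right]
    have h1 : (1 : ℝ) / (((0 : ℕ) : ℝ) + 1) = 1 := by simp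
    rw [h1]
    beta_reduce
    rw [hfs n]
    have hw0 : ∀ k, 0 ≤ cfcₙ (cutoff (l n)) (v k) := fun k => fEps_nn (l n) (hv0 k)
    have hwo : ∀ i j, i ≠ j → cfcₙ (cutoff (l n)) (v i) * cfcₙ (cutoff (l n)) (v j) = 0 := fun i j hij =>
      cfcn_orth (hv0 i) (hv0 j) (hvo i j hij) (cutoff_cont _) (cutoff_zero _) (cutoff_cont _) (cutoff_zero _)
    unfold fEps
    rw [D_sum_orth τ _ _ (fun k _ => hw0 k) (fun i _ j _ hij => hwo i j hij),
      T_cfcn_sum_orth τ _ _ (fun k _ => hw0 k) (fun i _ j _ hij => hwo i j hij) _ (cutoff_cont _) (cutoff_zero _)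
        (fun x _ => cutoff_nn _ _)]
    calc ∑ k ∈ Finset.range (n + 1), dTau τ (cfcₙ (cutoff (l n)) (v k))
        ≤ ∑ k ∈ Finset.range (n + 1), (η k + τ.toFun (cfcₙ (cutoff 1) (cfcₙ (cutoff (l n)) (v k)))) := by
          refine Finset.sum_le_sum fun k hk => ?_
          refine (D_cut_flat (hP k) (hl0 k) (hr k) (hl0 n) τ).trans ((hη τ hτ k).trans ?_)
          rw [add_comm]
          exact add_le_add le_rfl (T_cut_flat (hP k) (hl0 k) (hr k) (hl0 n)
            (hlanti _ _ (Nat.lt_succ_iff.mp (Finset.mem_range.mp hk))) τ)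
      _ ≤ _ := by
          rw [Finset.sum_add_distrib]
          exact add_le_add (ENNReal.sum_le_tsum _) le_rfl

end Helpers

/-- **Lemma.** Let `A` be a σ-unital algebraically simple C*-algebra with strict comparison and
surjective `Γ`, not purely infinite, and let `e ∈ Ped(A ⊗ K)₊` be a nonzero contraction.
For every `ε > 0` there is a positive contraction `e₀ ∈ Her(e)` with:
(1) `d_τ(e) - d_τ(e₀) < ε` on `\overline{QT(A)}^w`; and (2) an increasing sequence of positive
contractions `e_{0,n} ∈ Her(e₀)` with `τ(e_{0,n}) ↗ d_τ(e₀)` for every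
`τ ∈ \overline{QT(A)}^w` and `ω(e_{0,n}) < ε` for all `n`. -/
theorem exists_subelement_with_small_oscillation_approx
    (SB : Stabilization A W)
    (hσ : SigmaUnital A) (hsimple : IsSimpleCStar A) (halg : pedersen A = Set.univ)
    (hsc : StrictComparison W) (hΓ : GammaSurjective W) (hnpi : ¬ PurelyInfinite A)
    (e : W) (he : 0 ≤ e) (he0 : e ≠ 0) (hePed : e ∈ pedersen W) (hecontr : ‖e‖ ≤ 1)
    (ε : ℝ) (hε : 0 < ε) :
    ∃ e₀ : W, e₀ ∈ her e ∧ 0 ≤ e₀ ∧ ‖e₀‖ ≤ 1 ∧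
      (∀ τ ∈ closure (QTSet SB), dTau τ e < dTau τ e₀ + ENNReal.ofReal ε) ∧
      ∃ es : ℕ → W,
        (∀ n, es n ∈ her e₀ ∧ 0 ≤ es n ∧ ‖es n‖ ≤ 1) ∧
        (∀ n, es n ≤ es (n + 1)) ∧
        (∀ τ ∈ closure (QTSet SB), (⨆ n : ℕ, τ.toFun (es n)) = dTau τ e₀) ∧
        ∀ n, omegaOn (closure (QTSet SB)) (es n) < ENNReal.ofReal ε := by
  obtain ⟨M, hM, heM⟩ := uniform_bound SB hsimple he hePed
  have hε0 : ENNReal.ofReal ε ≠ 0 := by simpa using hε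
  obtain ⟨η, hη0, hη⟩ := ENNReal.exists_pos_sum_of_countable' (ε := ENNReal.ofReal ε / 3)
    (ENNReal.div_ne_zero.mpr ⟨hε0, by simp⟩) ℕ
  have h3 : (∑' k, η k) * 3 < ENNReal.ofReal ε := by
    rwa [ENNReal.lt_div_iff_mul_lt (by simp) (by simp)] at hη
  have h1 : (∑' k, η k) < ENNReal.ofReal ε := lt_of_le_of_lt (by
    calc (∑' k, η k) = (∑' k, η k) * 1 := (mul_one _).symm
      _ ≤ _ := mul_le_mul_right (by norm_num) _) h3
  obtain ⟨P, r, c1, c2, c3, c4, c5, c6⟩ := construct SB hsimple hΓ hsc hM he heM η fun n => (hη0 n).ne'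
  obtain ⟨e₀, d1, d2, d3, d4, es, d5, d6, d7, d8⟩ := assemble P r η c1 c2 c3 c4 c5
  refine ⟨e₀, d1, d2, d3, fun τ hτ => ?_, es, d5, d6, d7, fun n => (d8 n).trans_lt h1⟩
  have hle : dTau τ e ≤ dTau τ e₀ + (∑' k, η k) * 3 := by
    refine D_le_of_cut τ he fun n => (c6 τ hτ n).trans ?_
    calc ∑ k ∈ Finset.range n, (dTau τ (P k) + η k) + (dTau τ (P n) + (η n + η n + η n))
        = ∑ k ∈ Finset.range (n + 1), dTau τ (P k) +
          (∑ k ∈ Finset.range (n + 1), η k + η n + η n) := by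
          rw [Finset.sum_add_distrib, Finset.sum_range_succ, Finset.sum_range_succ]; ring
      _ ≤ dTau τ e₀ + (∑' k, η k + ∑' k, η k + ∑' k, η k) :=
          add_le_add (d4 τ n) (add_le_add (add_le_add (ENNReal.sum_le_tsum _) (ENNReal.le_tsum n))
            (ENNReal.le_tsum n))
      _ = _ := by ring
  by_cases htop : dTau τ e₀ = ∞
  · rw [htop, top_add]
    exact (heM τ hτ).trans_lt hM.lt_top
  · exact hle.trans_lt (ENNReal.add_lt_add_left htop h3)
end Paper
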